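/- arXiv:2105.05139 — 13 statements merged into one kernel-verified Lean document; each statement's English description precedes it below -/
import Mathlib

section
/- Let n ≥ 1 and let V : ℝ → M_n(ℝ) be a differentiable matrix-valued function. Suppose there exist constant matrices Υ, Λ, Θ ∈ M_n(ℝ) such that for all t ∈ ℝ: V'(t) = [Υ, V(t)], t·V'(t) + 2·V(t) = [Λ, V(t)], and t²·V'(t) + 4t·V(t) = [Θ, V(t)]. Then V(t) = 0 for all t ∈ ℝ. (This is the algebraic core of the paper's theorem that the case k = 3 is impossible: no system x'' = V(t)x outside the equivalence orbit of the free-particle system admits three Lie-symmetry vector fields with linearly independent t-components.) -/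
/-!
Replace the commutators with `Υ`, `Λ`, `Θ` by arbitrary operators `A`, `B`, `C` on a
finite-dimensional space. Differentiating the second and third conditions shows that on the span of
the values of `V` these operators obey the commutation relations of `∂_t`, `t∂_t`, `t²∂_t`, so that
`h = -2B`, `e = -C`, `f = A` is an `sl₂` triple there. At `t = 0` the conditions read `B V = 2 V`
and `C V = 0`: if nonzero, `V 0` would be a primitive vector of weight `-4`, whereas primitive
vectors of a finite-dimensional `sl₂`-module have weights in `ℕ`. Translating `t` moves any other
point to `0`.
-/

section Sl2

attribute [local instance] LieRing.ofAssociativeRing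

variable {K M : Type*} [Field K] [CharZero K] [AddCommGroup M] [Module K M]

theorem exists_nat_eq_weight_of_sl2_relations_on {p : Submodule K M} [FiniteDimensional K p]
    {h e f : Module.End K M} (hep : p ∈ e.invtSubmodule) (hfp : p ∈ f.invtSubmodule)
    (lie_e_f : ∀ x ∈ p, e (f x) - f (e x) = h x)
    (lie_h_e : ∀ x ∈ p, h (e x) - e (h x) = (2 : K) • e x)
    (lie_h_f : ∀ x ∈ p, h (f x) - f (h x) = -((2 : K) • f x))
    {v : M} (hvp : v ∈ p) (hv : v ≠ 0) {μ : K} (hhv : h v = μ • v) (hev : e v = 0) :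
    ∃ n : ℕ, μ = n := by
  obtain rfl | hμ := eq_or_ne μ 0
  · exact ⟨0, Nat.cast_zero.symm⟩
  have hhp (x : M) (hx : x ∈ p) : h x ∈ p :=
    lie_e_f x hx ▸ p.sub_mem (hep (hfp hx)) (hfp (hep hx))
  let h' : Module.End K p := h.restrict hhp
  let e' : Module.End K p := e.restrict hep
  let f' : Module.End K p := f.restrict hfp
  have triple : IsSl2Triple h' e' f' :=
    { h_ne_zero := fun h'_eq_zero ↦ smul_ne_zero hμ hv <|
        hhv ▸ congrArg Subtype.val (LinearMap.congr_fun h'_eq_zero ⟨v, hvp⟩)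
      lie_e_f := LinearMap.ext fun x ↦ Subtype.ext (lie_e_f x x.2)
      lie_h_e_nsmul := by
        rw [← Nat.cast_smul_eq_nsmul K]
        exact LinearMap.ext fun x ↦ Subtype.ext (lie_h_e x x.2)
      lie_h_f_nsmul := by
        rw [← Nat.cast_smul_eq_nsmul K]
        exact LinearMap.ext fun x ↦ Subtype.ext (lie_h_f x x.2) }
  have primitive : triple.HasPrimitiveVectorWith (⟨v, hvp⟩ : p) μ :=
    { ne_zero := fun v_eq_zero ↦ hv (congrArg Subtype.val v_eq_zero)
      lie_h := Subtype.ext hhv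
      lie_e := Subtype.ext hev }
  exact primitive.exists_nat

end Sl2

section Derivative

variable {𝕜 E F : Type*} [NontriviallyNormedField 𝕜] [CompleteSpace 𝕜]
  [NormedAddCommGroup E] [NormedSpace 𝕜 E] [FiniteDimensional 𝕜 E]

theorem hasDerivAt_linearMap_comp [NormedAddCommGroup F] [NormedSpace 𝕜 F] (L : E →ₗ[𝕜] F)
    {f : 𝕜 → E} {f' : E} {t : 𝕜} (hf : HasDerivAt f f' t) :
    HasDerivAt (fun s ↦ L (f s)) (L f') t :=
  L.toContinuousLinearMap.hasFDerivAt.comp_hasDerivAt t hf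

theorem mem_span_range_of_hasDerivAt {f : 𝕜 → E} {f' : E} {t : 𝕜} (hf : HasDerivAt f f' t) :
    f' ∈ Submodule.span 𝕜 (Set.range f) := by
  have hclosed := (Submodule.span 𝕜 (Set.range f)).closed_of_finiteDimensional
  have hderiv := range_deriv_subset_closure_span_image f dense_univ ⟨t, hf.deriv⟩
  rwa [Set.image_univ, hclosed.closure_eq] at hderiv

end Derivative

/-- The curve `V` satisfies the classifying conditions of the vector fields `∂_t`, `t∂_t` and
`t²∂_t`, with arbitrary endomorphisms `A`, `B`, `C` in place of the commutators with `Υ`, `Λ`, `Θ`.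
-/
structure IsProjectivelyCovariant {𝕜 E : Type*} [NontriviallyNormedField 𝕜]
    [NormedAddCommGroup E] [NormedSpace 𝕜 E] (A B C : Module.End 𝕜 E) (V : 𝕜 → E) : Prop where
  hasDerivAt (t : 𝕜) : HasDerivAt V (A (V t)) t
  dilation (t : 𝕜) : t • A (V t) + (2 : 𝕜) • V t = B (V t)
  projective (t : 𝕜) : t ^ 2 • A (V t) + (4 * t) • V t = C (V t)

namespace IsProjectivelyCovariant

variable {𝕜 E : Type*} [NontriviallyNormedField 𝕜] [NormedAddCommGroup E] [NormedSpace 𝕜 E]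
  {A B C : Module.End 𝕜 E} {V : 𝕜 → E}

theorem comp_add_const (hV : IsProjectivelyCovariant A B C V) (a : 𝕜) :
    IsProjectivelyCovariant A (B - a • A) (C - (2 * a) • B + a ^ 2 • A) (fun t ↦ V (t + a)) where
  hasDerivAt t := (hV.hasDerivAt (t + a)).comp_add_const t a
  dilation t := by
    simp only [LinearMap.sub_apply, LinearMap.smul_apply, ← hV.dilation]
    module
  projective t := by
    simp only [LinearMap.add_apply, LinearMap.sub_apply, LinearMap.smul_apply, ← hV.dilation,
      ← hV.projective]
    module

variable [CompleteSpace 𝕜] [FiniteDimensional 𝕜 E]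

theorem dilation_deriv (hV : IsProjectivelyCovariant A B C V) (t : 𝕜) :
    t • A (A (V t)) + (3 : 𝕜) • A (V t) = B (A (V t)) := by
  have hAV := hasDerivAt_linearMap_comp A (hV.hasDerivAt t)
  have hBV := hasDerivAt_linearMap_comp B (hV.hasDerivAt t)
  have hlhs := ((hasDerivAt_id' t).smul hAV).add ((hV.hasDerivAt t).const_smul (2 : 𝕜))
  rw [← hlhs.unique (hBV.congr_of_eventuallyEq (.of_forall hV.dilation))]
  module

theorem projective_deriv (hV : IsProjectivelyCovariant A B C V) (t : 𝕜) :
    t ^ 2 • A (A (V t)) + (6 * t) • A (V t) + (4 : 𝕜) • V t = C (A (V t)) := by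
  have hAV := hasDerivAt_linearMap_comp A (hV.hasDerivAt t)
  have hCV := hasDerivAt_linearMap_comp C (hV.hasDerivAt t)
  have hlhs := ((hasDerivAt_pow 2 t).smul hAV).add
    (((hasDerivAt_id' t).const_mul 4).smul (hV.hasDerivAt t))
  rw [← hlhs.unique (hCV.congr_of_eventuallyEq (.of_forall hV.projective))]
  module

theorem commutator_dilation_translation (hV : IsProjectivelyCovariant A B C V) {x : E}
    (hx : x ∈ Submodule.span 𝕜 (Set.range V)) : B (A x) - A (B x) = A x := by
  refine LinearMap.eqOn_span (f := B * A - A * B) (g := A) (Set.forall_mem_range.2 fun t ↦ ?_) hx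
  simp only [LinearMap.sub_apply, Module.End.mul_apply, map_add, map_smul, ← hV.dilation,
    ← hV.dilation_deriv]
  module

theorem commutator_projective_translation (hV : IsProjectivelyCovariant A B C V) {x : E}
    (hx : x ∈ Submodule.span 𝕜 (Set.range V)) : C (A x) - A (C x) = (2 : 𝕜) • B x := by
  refine LinearMap.eqOn_span (f := C * A - A * C) (g := (2 : 𝕜) • B)
    (Set.forall_mem_range.2 fun t ↦ ?_) hx
  simp only [LinearMap.sub_apply, Module.End.mul_apply, LinearMap.smul_apply, map_add, map_smul,
    ← hV.dilation, ← hV.projective, ← hV.projective_deriv]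
  module

theorem commutator_projective_dilation (hV : IsProjectivelyCovariant A B C V) {x : E}
    (hx : x ∈ Submodule.span 𝕜 (Set.range V)) : C (B x) - B (C x) = C x := by
  refine LinearMap.eqOn_span (f := C * B - B * C) (g := C) (Set.forall_mem_range.2 fun t ↦ ?_) hx
  simp only [LinearMap.sub_apply, Module.End.mul_apply, map_add, map_smul, ← hV.dilation,
    ← hV.projective, ← hV.dilation_deriv, ← hV.projective_deriv]
  module

theorem span_range_mem_invtSubmodule_translation (hV : IsProjectivelyCovariant A B C V) :
    Submodule.span 𝕜 (Set.range V) ∈ A.invtSubmodule :=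
  Submodule.span_le.2 <| Set.range_subset_iff.2 fun t ↦
    mem_span_range_of_hasDerivAt (hV.hasDerivAt t)

theorem span_range_mem_invtSubmodule_projective (hV : IsProjectivelyCovariant A B C V) :
    Submodule.span 𝕜 (Set.range V) ∈ C.invtSubmodule := by
  refine Submodule.span_le.2 <| Set.range_subset_iff.2 fun t ↦ ?_
  have hVt : V t ∈ Submodule.span 𝕜 (Set.range V) := Submodule.subset_span ⟨t, rfl⟩
  have hAVt := hV.span_range_mem_invtSubmodule_translation hVt
  rw [SetLike.mem_coe, Submodule.mem_comap, ← hV.projective]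
  exact add_mem (Submodule.smul_mem _ _ hAVt) (Submodule.smul_mem _ _ hVt)

theorem apply_zero [CharZero 𝕜] (hV : IsProjectivelyCovariant A B C V) : V 0 = 0 := by
  by_contra hV0
  have hB : B (V 0) = (2 : 𝕜) • V 0 := by simpa using (hV.dilation 0).symm
  have hC : C (V 0) = 0 := by simpa using (hV.projective 0).symm
  obtain ⟨n, hn⟩ : ∃ n : ℕ, (-4 : 𝕜) = n := by
    refine exists_nat_eq_weight_of_sl2_relations_on (h := (-2 : 𝕜) • B) (e := -C) (f := A)
      (fun x hx ↦ (Submodule.span 𝕜 (Set.range V)).neg_mem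
        (hV.span_range_mem_invtSubmodule_projective hx))
      hV.span_range_mem_invtSubmodule_translation (fun x hx ↦ ?lie_e_f) (fun x hx ↦ ?lie_h_e)
      (fun x hx ↦ ?lie_h_f) (Submodule.subset_span ⟨0, rfl⟩) hV0 ?weight ?killed
    all_goals simp only [LinearMap.neg_apply, LinearMap.smul_apply, map_neg, map_smul]
    case lie_e_f =>
      linear_combination (norm := module) -hV.commutator_projective_translation hx
    case lie_h_e =>
      linear_combination (norm := module) (-2 : 𝕜) • hV.commutator_projective_dilation hx
    case lie_h_f =>
      linear_combination (norm := module) (-2 : 𝕜) • hV.commutator_dilation_translation hx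
    case weight => linear_combination (norm := module) (-2 : 𝕜) • hB
    case killed => rw [hC, neg_zero]
  have cast_eq_zero : ((n + 4 : ℕ) : 𝕜) = 0 := by
    push_cast
    linear_combination -hn
  exact absurd (Nat.cast_eq_zero.1 cast_eq_zero) (Nat.succ_ne_zero _)

theorem eq_zero [CharZero 𝕜] (hV : IsProjectivelyCovariant A B C V) (t : 𝕜) : V t = 0 := by
  simpa using (hV.comp_add_const t).apply_zero

end IsProjectivelyCovariant

open scoped Matrix.Norms.Elementwise in
theorem case_k_eq_three_impossible_general {𝕜 ι : Type*} [NontriviallyNormedField 𝕜]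
    [CompleteSpace 𝕜] [CharZero 𝕜] [Fintype ι] (V V' : 𝕜 → Matrix ι ι 𝕜) (Υ Λ Θ : Matrix ι ι 𝕜)
    (hdiff : ∀ (t : 𝕜) (i j : ι), HasDerivAt (fun s => V s i j) (V' t i j) t)
    (h1 : ∀ t : 𝕜, V' t = Υ * V t - V t * Υ)
    (h2 : ∀ t : 𝕜, t • V' t + (2 : 𝕜) • V t = Λ * V t - V t * Λ)
    (h3 : ∀ t : 𝕜, (t ^ 2) • V' t + (4 * t) • V t = Θ * V t - V t * Θ) :
    ∀ t : 𝕜, V t = 0 := by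
  let ad (X : Matrix ι ι 𝕜) : Module.End 𝕜 (Matrix ι ι 𝕜) :=
    LinearMap.mulLeft 𝕜 X - LinearMap.mulRight 𝕜 X
  have ad_Υ (t : 𝕜) : ad Υ (V t) = V' t := (h1 t).symm
  have hV : IsProjectivelyCovariant (ad Υ) (ad Λ) (ad Θ) V :=
    { hasDerivAt := fun t ↦ ad_Υ t ▸ hasDerivAt_pi.2 fun i ↦ hasDerivAt_pi.2 (hdiff t i)
      dilation := fun t ↦ ad_Υ t ▸ h2 t
      projective := fun t ↦ ad_Υ t ▸ h3 t }
  exact hV.eq_zero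

/-- **Impossibility of the case `k = 3`.**
If a differentiable matrix-valued function `V : ℝ → M_n(ℝ)` (with derivative `V'`)
satisfies, for constant matrices `Υ, Λ, Θ`, the three classifying conditions
`V' = [Υ, V]`, `t·V' + 2·V = [Λ, V]` and `t²·V' + 4t·V = [Θ, V]` for all `t`,
then `V ≡ 0`. -/
theorem case_k_eq_three_impossible (n : ℕ) (hn : 1 ≤ n)
    (V V' : ℝ → Matrix (Fin n) (Fin n) ℝ)
    (Υ Λ Θ : Matrix (Fin n) (Fin n) ℝ)
    (hdiff : ∀ (t : ℝ) (i j : Fin n), HasDerivAt (fun s => V s i j) (V' t i j) t)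
    (h1 : ∀ t : ℝ, V' t = Υ * V t - V t * Υ)
    (h2 : ∀ t : ℝ, t • V' t + (2 : ℝ) • V t = Λ * V t - V t * Λ)
    (h3 : ∀ t : ℝ, (t ^ 2) • V' t + (4 * t) • V t = Θ * V t - V t * Θ) :
    ∀ t : ℝ, V t = 0 :=
  case_k_eq_three_impossible_general V V' Υ Λ Θ hdiff h1 h2 h3
end

section
/- Let n ≥ 2 and let V : ℝ → M_n(ℝ) be smooth, and suppose there exists t₀ ∈ ℝ such that V(t₀) is not a scalar multiple of the identity matrix E. Then any three smooth functions τ₁, τ₂, τ₃ : ℝ → ℝ, each of which admits a constant matrix Γᵢ ∈ M_n(ℝ) such that (τᵢ, Γᵢ) is a symmetry pair of V, are linearly dependent over ℝ. (Equivalently: the space of t-components of essential Lie-symmetry vector fields of the system x_tt = V(t)x has dimension at most 2.) -/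
/-- A pair `(τ, Γ)`, with `τ : ℝ → ℝ` smooth and `Γ` a constant `n × n` matrix, is a
*symmetry pair* of a matrix-valued function `V : ℝ → M_n(ℝ)` if
`τ(t)·V'(t) = [Γ, V(t)] − 2τ'(t)·V(t) + (1/2)τ'''(t)·E` for all `t ∈ ℝ`. -/
def IsSymmetryPair (n : ℕ) (V : ℝ → Matrix (Fin n) (Fin n) ℝ)
    (τ : ℝ → ℝ) (Γ : Matrix (Fin n) (Fin n) ℝ) : Prop :=
  ContDiff ℝ (⊤ : ℕ∞) τ ∧
    ∀ t : ℝ,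
      τ t • (Matrix.of fun i j => deriv (fun s => V s i j) t) =
        (Γ * V t - V t * Γ) - (2 * deriv τ t) • V t
          + (iteratedDeriv 3 τ t / 2) • (1 : Matrix (Fin n) (Fin n) ℝ)

/-!
Split `V` into its scalar part `v E` and its traceless part `W`. The symmetry equation says
`τ''' = 4 v τ' + 2 v' τ` and `[Γ, W] = τ W' + 2 τ' W`. Suppose `τ` vanishes to order exactly two at
`t₀`. Differentiating the second equation `k + 1` times at `t₀` shows that `ad Γ` sends
`W⁽ᵏ⁺¹⁾(t₀)` to a nonzero multiple of `W⁽ᵏ⁾(t₀)` modulo lower derivatives, and it kills `W(t₀)`. So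
`W(t₀)` lies in the kernel of `ad Γ` and in the range of each of its powers, which by Fitting's
lemma forces `W(t₀) = 0`. Where `V(t₀)` is not scalar, a double zero of `τ` at `t₀` is therefore a
triple zero, and then `τ = 0` by uniqueness for the third-order equation. Hence `τ` is determined by
`τ(t₀)` and `τ'(t₀)`.
-/

open scoped ContDiff

section Chain

variable {R M : Type*} [CommRing R] [AddCommGroup M] [Module R M]
  {A : Module.End R M} {w : ℕ → M} {c : ℕ → R}

theorem span_image_Iio_le_ker_pow (h_zero : A (w 0) = 0)
    (h_succ : ∀ k, A (w (k + 1)) - c k • w k ∈ Submodule.span R (w '' Set.Iio k)) (k : ℕ) :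
    Submodule.span R (w '' Set.Iio k) ≤ LinearMap.ker (A ^ k) := by
  have span_mono {i j : ℕ} (hij : i ≤ j) :
      Submodule.span R (w '' Set.Iio i) ≤ Submodule.span R (w '' Set.Iio j) :=
    Submodule.span_mono (Set.image_mono (Set.Iio_subset_Iio hij))
  have map_mem : ∀ i, A (w i) ∈ Submodule.span R (w '' Set.Iio i)
    | 0 => h_zero ▸ Submodule.zero_mem _
    | i + 1 => by
      rw [← sub_add_cancel (A (w (i + 1))) (c i • w i)]
      exact add_mem (span_mono i.le_succ (h_succ i))
        (Submodule.smul_mem _ _ (Submodule.subset_span ⟨i, i.lt_succ_self, rfl⟩))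
  induction k with
  | zero => simp
  | succ k ih =>
    rw [Submodule.span_le]
    rintro _ ⟨i, hi, rfl⟩
    simpa [pow_succ] using ih (span_mono (Nat.lt_succ_iff.1 hi) (map_mem i))

theorem pow_apply_eq_prod_smul (h_zero : A (w 0) = 0)
    (h_succ : ∀ k, A (w (k + 1)) - c k • w k ∈ Submodule.span R (w '' Set.Iio k)) (k : ℕ) :
    (A ^ k) (w k) = (∏ i ∈ Finset.range k, c i) • w 0 := by
  induction k with
  | zero => simp
  | succ k ih =>
    have h := span_image_Iio_le_ker_pow h_zero h_succ k (h_succ k)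
    rw [LinearMap.mem_ker, map_sub, map_smul, ih, sub_eq_zero] at h
    rw [pow_succ, Module.End.mul_apply, h, smul_smul, Finset.prod_range_succ, mul_comm]

theorem eq_zero_of_map_succ_sub_smul_mem_span [IsDomain R] [Module.IsTorsionFree R M]
    [IsNoetherian R M] (h_zero : A (w 0) = 0)
    (h_succ : ∀ k, A (w (k + 1)) - c k • w k ∈ Submodule.span R (w '' Set.Iio k))
    (hc : ∀ k, c k ≠ 0) : w 0 = 0 := by
  obtain ⟨k, h_disj, hk⟩ := (A.eventually_disjoint_ker_pow_range_pow.and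
    (Filter.eventually_ge_atTop 1)).exists
  have h_prod : ∏ i ∈ Finset.range k, c i ≠ 0 := Finset.prod_ne_zero_iff.2 fun i _ => hc i
  have h_ker : (∏ i ∈ Finset.range k, c i) • w 0 ∈ LinearMap.ker (A ^ k) := by
    simp [Module.End.pow_map_zero_of_le hk, h_zero]
  have h_range : (∏ i ∈ Finset.range k, c i) • w 0 ∈ LinearMap.range (A ^ k) :=
    ⟨w k, pow_apply_eq_prod_smul h_zero h_succ k⟩
  exact (smul_eq_zero.1 (Submodule.disjoint_def.1 h_disj _ h_ker h_range)).resolve_left h_prod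

end Chain

section IteratedDeriv

variable {𝕜 E F : Type*} [NontriviallyNormedField 𝕜] [NormedAddCommGroup E] [NormedSpace 𝕜 E]
  [NormedAddCommGroup F] [NormedSpace 𝕜 F]

theorem hasDerivAt_iteratedDeriv_of_contDiff {f : 𝕜 → F} {n k : ℕ} (hf : ContDiff 𝕜 n f)
    (hk : k < n) (t : 𝕜) : HasDerivAt (iteratedDeriv k f) (iteratedDeriv (k + 1) f t) t := by
  rw [iteratedDeriv_succ]
  exact (hf.differentiable_iteratedDeriv k (mod_cast hk) t).hasDerivAt

theorem iteratedDeriv_clm_comp (L : E →L[𝕜] F) {k : ℕ} {g : 𝕜 → E} {t : 𝕜}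
    (hg : ContDiffAt 𝕜 k g t) :
    iteratedDeriv k (fun s => L (g s)) t = L (iteratedDeriv k g t) :=
  congrArg (· fun _ => 1) (L.iteratedFDeriv_comp_left hg le_rfl)

theorem iteratedDeriv_smul_sub_mem_span {m k : ℕ} {f : 𝕜 → 𝕜} {g : 𝕜 → F} {t : 𝕜}
    (hf : ContDiffAt 𝕜 (m + k : ℕ) f t) (hg : ContDiffAt 𝕜 (m + k : ℕ) g t)
    (h_vanish : ∀ i < m, iteratedDeriv i f t = 0) :
    iteratedDeriv (m + k) (f • g) t -
        ((m + k).choose m * iteratedDeriv m f t) • iteratedDeriv k g t ∈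
      Submodule.span 𝕜 ((iteratedDeriv · g t) '' Set.Iio k) := by
  have leibniz := iteratedDerivWithin_smul (Set.mem_univ t) uniqueDiffOn_univ hf hg
  simp only [iteratedDerivWithin_univ] at leibniz
  have hm : m ∈ Finset.range (m + k + 1) := by simp
  rw [leibniz, ← Finset.add_sum_erase _ _ hm, Nat.add_sub_cancel_left, mul_smul,
    Nat.cast_smul_eq_nsmul, add_sub_cancel_left]
  refine sum_mem fun i hi => ?_
  rw [Finset.mem_erase, Finset.mem_range] at hi
  obtain him | hik : i < m ∨ m + k - i < k := by lia
  · simp [h_vanish i him]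
  · have h_mem : iteratedDeriv (m + k - i) g t ∈
        Submodule.span 𝕜 ((iteratedDeriv · g t) '' Set.Iio k) :=
      Submodule.subset_span ⟨_, hik, rfl⟩
    exact nsmul_mem (Submodule.smul_mem _ _ h_mem) _

end IteratedDeriv

section LinearODE

theorem eq_zero_of_hasDerivAt_clm {E : Type*} [NormedAddCommGroup E] [NormedSpace ℝ E]
    {A : ℝ → E →L[ℝ] E} (hA : Continuous A) {y : ℝ → E}
    (hy : ∀ t, HasDerivAt y (A t (y t)) t) {t₀ : ℝ} (h₀ : y t₀ = 0) : y = 0 := by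
  ext t
  obtain ⟨a, b, ht, ht₀⟩ : ∃ a b, t ∈ Set.Ioo a b ∧ t₀ ∈ Set.Ioo a b :=
    ⟨min t t₀ - 1, max t t₀ + 1, by grind, by grind⟩
  obtain ⟨C, hC⟩ := (isCompact_Icc (a := a) (b := b)).exists_bound_of_continuousOn hA.continuousOn
  have h_lip : ∀ s ∈ Set.Ioo a b, LipschitzOnWith C.toNNReal (A s) Set.univ := fun s hs =>
    ((A s).lipschitz.weaken (NNReal.le_toNNReal_of_coe_le
      (hC s (Set.Ioo_subset_Icc_self hs)))).lipschitzOnWith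
  exact ODE_solution_unique_of_mem_Ioo (v := fun s => A s) (g := 0) h_lip ht₀
    (fun s _ => ⟨hy s, Set.mem_univ _⟩) (fun s _ => ⟨by simp, Set.mem_univ _⟩) h₀ ht

theorem eq_zero_of_iteratedDeriv_eq_sum {n : ℕ} {a : Fin n → ℝ → ℝ} (ha : ∀ i, Continuous (a i))
    {y : ℝ → ℝ} (hy : ContDiff ℝ n y)
    (hode : ∀ t, iteratedDeriv n y t = ∑ i, a i t * iteratedDeriv i y t) {t₀ : ℝ}
    (h₀ : ∀ i < n, iteratedDeriv i y t₀ = 0) : y = 0 := by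
  let companion : ℝ → Matrix (Fin n) (Fin n) ℝ := fun t => Matrix.of fun i j =>
    if (i : ℕ) + 1 < n then (if (j : ℕ) = i + 1 then 1 else 0) else a j t
  let toCLM : Matrix (Fin n) (Fin n) ℝ ≃ₗ[ℝ] ((Fin n → ℝ) →L[ℝ] (Fin n → ℝ)) :=
    Matrix.toLin' ≪≫ₗ LinearMap.toContinuousLinearMap
  let jet : ℝ → Fin n → ℝ := fun t i => iteratedDeriv i y t
  have h_cont : Continuous fun t => toCLM (companion t) := by
    refine toCLM.toLinearMap.continuous_of_finiteDimensional.comp (continuous_matrix fun i j => ?_)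
    by_cases hi : (i : ℕ) + 1 < n <;> simp [companion, hi, ha, continuous_const]
  have h_deriv : ∀ t, HasDerivAt jet (toCLM (companion t) (jet t)) t := by
    refine fun t => hasDerivAt_pi.2 fun i =>
      (hasDerivAt_iteratedDeriv_of_contDiff hy i.is_lt t).congr_deriv ?_
    change _ = ∑ j, companion t i j * jet t j
    by_cases hi : (i : ℕ) + 1 < n
    · have h_eq : ∀ j : Fin n, (j : ℕ) = i + 1 ↔ j = ⟨i + 1, hi⟩ := fun j => by simp [Fin.ext_iff]
      simp [companion, jet, hi, h_eq]
    · have h_last : (i : ℕ) + 1 = n := by lia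
      simp [companion, jet, h_last, hode]
  have h_jet : jet = 0 := eq_zero_of_hasDerivAt_clm h_cont h_deriv (funext fun i => h₀ i i.is_lt)
  ext t
  obtain rfl | hn := n.eq_zero_or_pos
  · simpa using hode t
  · exact congrFun₂ h_jet t ⟨0, hn⟩

end LinearODE

section DoubleZero

variable {E : Type*} [NormedAddCommGroup E] [NormedSpace ℝ E] {τ : ℝ → ℝ} {W : ℝ → E} {c t₀ : ℝ}

theorem map_iteratedDeriv_succ_eq_add {A : E →L[ℝ] E} (hτ : ContDiff ℝ ∞ τ)
    (hW : ContDiff ℝ ∞ W) (hA : ∀ t, A (W t) = τ t • deriv W t + (c * deriv τ t) • W t)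
    (k : ℕ) (t : ℝ) :
    A (iteratedDeriv (k + 1) W t) = iteratedDeriv (k + 2) (τ • W) t +
      (c - 1) • iteratedDeriv (k + 1) (deriv τ • W) t := by
  have h_total : (fun t => A (W t)) = deriv (τ • W) + (c - 1) • (deriv τ • W) := by
    funext t
    have h_deriv : deriv (τ • W) t = τ t • deriv W t + deriv τ t • W t :=
      deriv_smul (hτ.differentiable (by simp) t) (hW.differentiable (by simp) t)
    simp only [hA, Pi.add_apply, Pi.smul_apply, Pi.smul_apply', h_deriv]
    module
  have hτW : ContDiff ℝ ∞ (deriv (τ • W)) := (contDiff_infty_iff_deriv.1 (hτ.smul hW)).2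
  have hτ'W : ContDiff ℝ ∞ ((c - 1) • (deriv τ • W)) :=
    ((contDiff_infty_iff_deriv.1 hτ).2.smul hW).const_smul _
  rw [← iteratedDeriv_clm_comp A (contDiff_infty.1 hW _).contDiffAt, h_total,
    iteratedDeriv_add (contDiff_infty.1 hτW _).contDiffAt
      (contDiff_infty.1 hτ'W _).contDiffAt,
    iteratedDeriv_const_smul_field, ← iteratedDeriv_succ']

theorem map_iteratedDeriv_succ_sub_smul_mem_span {A : E →L[ℝ] E} (hτ : ContDiff ℝ ∞ τ)
    (hW : ContDiff ℝ ∞ W) (hA : ∀ t, A (W t) = τ t • deriv W t + (c * deriv τ t) • W t)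
    (h₀ : τ t₀ = 0) (h₁ : deriv τ t₀ = 0) (k : ℕ) :
    A (iteratedDeriv (k + 1) W t₀) -
        ((k + 1) * (k / 2 + c) * iteratedDeriv 2 τ t₀) • iteratedDeriv k W t₀ ∈
      Submodule.span ℝ ((iteratedDeriv · W t₀) '' Set.Iio k) := by
  have hτ' : ContDiff ℝ ∞ (deriv τ) := (contDiff_infty_iff_deriv.1 hτ).2
  -- The coefficient is `(k + 2).choose 2 + (c - 1) * (k + 1)`: the leading Leibniz terms of
  -- `(τ W)⁽ᵏ⁺²⁾` and `(c - 1) (τ' W)⁽ᵏ⁺¹⁾`.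
  have h_two := iteratedDeriv_smul_sub_mem_span (m := 2) (k := k)
    (contDiff_infty.1 hτ _).contDiffAt (contDiff_infty.1 hW _).contDiffAt
    (t := t₀) (fun i hi => by interval_cases i <;> simp [h₀, h₁])
  have h_one := iteratedDeriv_smul_sub_mem_span (m := 1) (k := k)
    (contDiff_infty.1 hτ' _).contDiffAt (contDiff_infty.1 hW _).contDiffAt
    (t := t₀) (by simp [h₁])
  convert add_mem h_two (Submodule.smul_mem _ (c - 1) h_one) using 1
  rw [map_iteratedDeriv_succ_eq_add hτ hW hA, ← iteratedDeriv_succ', add_comm 2 k, add_comm 1 k,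
    Nat.cast_choose_two, Nat.choose_one_right]
  push_cast
  module

theorem eq_zero_of_map_eq_smul_deriv_add [FiniteDimensional ℝ E] {A : Module.End ℝ E}
    (hτ : ContDiff ℝ ∞ τ) (hW : ContDiff ℝ ∞ W)
    (hA : ∀ t, A (W t) = τ t • deriv W t + (c * deriv τ t) • W t) (hc : 0 < c)
    (h₀ : τ t₀ = 0) (h₁ : deriv τ t₀ = 0) (h₂ : iteratedDeriv 2 τ t₀ ≠ 0) : W t₀ = 0 := by
  have h_zero : A (iteratedDeriv 0 W t₀) = 0 := by simp [hA, h₀, h₁]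
  have h_coeff (k : ℕ) : ((k + 1) * (k / 2 + c) * iteratedDeriv 2 τ t₀ : ℝ) ≠ 0 :=
    mul_ne_zero (by positivity) h₂
  simpa using eq_zero_of_map_succ_sub_smul_mem_span h_zero
    (map_iteratedDeriv_succ_sub_smul_mem_span (A := LinearMap.toContinuousLinearMap A)
      hτ hW hA h₀ h₁) h_coeff

end DoubleZero

section ScalarPart

variable {ι K : Type*} [Fintype ι] [Field K]

/-- The coefficient of the identity in the decomposition of a matrix into a scalar and a traceless
matrix: the mean of the diagonal entries, or `0` by convention if the size vanishes in `K`. -/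
noncomputable def scalarPart : Matrix ι ι K →ₗ[K] K :=
  (Fintype.card ι : K)⁻¹ • Matrix.traceLinearMap ι K K

theorem scalarPart_commutator (A B : Matrix ι ι K) : scalarPart (A * B - B * A) = 0 := by
  simp [scalarPart, Matrix.trace_mul_comm A B]

variable [DecidableEq ι]

/-- The projection of a matrix onto the traceless matrices along the scalar ones, provided that the
size is nonzero in `K`. -/
noncomputable def tracelessPart : Module.End K (Matrix ι ι K) :=
  LinearMap.id - scalarPart.smulRight 1

theorem scalarPart_one [CharZero K] [Nonempty ι] : scalarPart (1 : Matrix ι ι K) = 1 := by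
  simp [scalarPart]

theorem tracelessPart_one [CharZero K] [Nonempty ι] :
    tracelessPart (1 : Matrix ι ι K) = 0 := by
  simp [tracelessPart, scalarPart_one]

theorem tracelessPart_commutator (A B : Matrix ι ι K) :
    tracelessPart (A * B - B * A) = A * tracelessPart B - tracelessPart B * A := by
  simp only [tracelessPart, LinearMap.sub_apply, LinearMap.id_apply, LinearMap.smulRight_apply,
    scalarPart_commutator, zero_smul, sub_zero]
  noncomm_ring

end ScalarPart

section LinearMapComp

variable {E F : Type*} [NormedAddCommGroup E] [NormedSpace ℝ E] [FiniteDimensional ℝ E]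
  [NormedAddCommGroup F] [NormedSpace ℝ F] (L : E →ₗ[ℝ] F) {g : ℝ → E}

theorem contDiff_linearMap_comp {m : ℕ∞ω} (hg : ContDiff ℝ m g) :
    ContDiff ℝ m fun t => L (g t) :=
  (LinearMap.toContinuousLinearMap L).contDiff.comp hg

theorem deriv_linearMap_comp {t : ℝ} (hg : DifferentiableAt ℝ g t) :
    deriv (fun s => L (g s)) t = L (deriv g t) :=
  ((LinearMap.toContinuousLinearMap L).hasFDerivAt.comp_hasDerivAt t hg.hasDerivAt).deriv

end LinearMapComp

attribute [local instance] Matrix.normedAddCommGroup Matrix.normedSpace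

section MatrixEntries

variable {ι κ : Type*} {V : ℝ → Matrix ι κ ℝ}

theorem contDiff_matrix [Fintype ι] [Fintype κ] {m : ℕ∞ω}
    (hV : ∀ i j, ContDiff ℝ m fun t => V t i j) : ContDiff ℝ m V :=
  contDiff_pi.2 fun i => contDiff_pi.2 fun j => hV i j

theorem deriv_matrix [Finite ι] [Finite κ] {t : ℝ}
    (hV : ∀ i j, DifferentiableAt ℝ (fun s => V s i j) t) :
    deriv V t = Matrix.of fun i j => deriv (fun s => V s i j) t := by
  cases nonempty_fintype ι
  cases nonempty_fintype κ
  exact (hasDerivAt_pi.2 fun i => hasDerivAt_pi.2 fun j => (hV i j).hasDerivAt).deriv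

end MatrixEntries

namespace IsSymmetryPair

variable {n : ℕ} {V : ℝ → Matrix (Fin n) (Fin n) ℝ} {τ : ℝ → ℝ} {Γ : Matrix (Fin n) (Fin n) ℝ}

theorem smul_deriv (h : IsSymmetryPair n V τ Γ) (hV : ContDiff ℝ ∞ V) (t : ℝ) :
    τ t • deriv V t = (Γ * V t - V t * Γ) - (2 * deriv τ t) • V t +
      (iteratedDeriv 3 τ t / 2) • (1 : Matrix (Fin n) (Fin n) ℝ) := by
  have h_entry (i j : Fin n) : DifferentiableAt ℝ (fun s => V s i j) t :=
    differentiableAt_pi.1 (differentiableAt_pi.1 (hV.differentiable (by simp) t) i) j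
  rw [deriv_matrix h_entry, h.2 t]

theorem iteratedDeriv_three [NeZero n] (h : IsSymmetryPair n V τ Γ) (hV : ContDiff ℝ ∞ V) (t : ℝ) :
    iteratedDeriv 3 τ t =
      2 * deriv (fun s => scalarPart (V s)) t * τ t + 4 * scalarPart (V t) * deriv τ t := by
  have h_deriv : deriv (fun s => scalarPart (V s)) t = scalarPart (deriv V t) :=
    deriv_linearMap_comp scalarPart (hV.differentiable (by simp) t)
  have h_scalar := congrArg scalarPart (h.smul_deriv hV t)
  rw [map_add, map_sub, scalarPart_commutator] at h_scalar
  simp only [map_smul, scalarPart_one, smul_eq_mul] at h_scalar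
  rw [h_deriv]
  linarith

theorem commutator_tracelessPart [NeZero n] (h : IsSymmetryPair n V τ Γ) (hV : ContDiff ℝ ∞ V)
    (t : ℝ) :
    Γ * tracelessPart (V t) - tracelessPart (V t) * Γ =
      τ t • deriv (fun s => tracelessPart (V s)) t + (2 * deriv τ t) • tracelessPart (V t) := by
  have h_deriv : deriv (fun s => tracelessPart (V s)) t = tracelessPart (deriv V t) :=
    deriv_linearMap_comp tracelessPart (hV.differentiable (by simp) t)
  have h_traceless := congrArg tracelessPart (h.smul_deriv hV t)
  rw [map_add, map_sub, tracelessPart_commutator] at h_traceless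
  simp only [map_smul, tracelessPart_one, smul_zero, add_zero] at h_traceless
  rw [h_deriv, h_traceless, sub_add_cancel]

theorem eq_zero_of_triple_zero [NeZero n] (h : IsSymmetryPair n V τ Γ) (hV : ContDiff ℝ ∞ V)
    {t₀ : ℝ} (h₀ : τ t₀ = 0) (h₁ : deriv τ t₀ = 0) (h₂ : iteratedDeriv 2 τ t₀ = 0) : τ = 0 := by
  have h_scalar : ContDiff ℝ ∞ fun t => scalarPart (V t) := contDiff_linearMap_comp _ hV
  have h_scalar' : ContDiff ℝ ∞ (deriv fun t => scalarPart (V t)) :=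
    (contDiff_infty_iff_deriv.1 h_scalar).2
  refine eq_zero_of_iteratedDeriv_eq_sum (n := 3)
    (a := ![fun t => 2 * deriv (fun s => scalarPart (V s)) t, fun t => 4 * scalarPart (V t), 0])
    (fun i => ?_) (contDiff_infty.1 h.1 3) (fun t => ?_) (t₀ := t₀) fun i hi => ?_
  · fin_cases i
    · exact continuous_const.mul h_scalar'.continuous
    · exact continuous_const.mul h_scalar.continuous
    · exact continuous_zero
  · simp [Fin.sum_univ_three, h.iteratedDeriv_three hV t]
  · interval_cases i <;> simp [h₀, h₁, h₂]

theorem iteratedDeriv_two_eq_zero [NeZero n] (h : IsSymmetryPair n V τ Γ) (hV : ContDiff ℝ ∞ V)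
    {t₀ : ℝ} (ht₀ : tracelessPart (V t₀) ≠ 0) (h₀ : τ t₀ = 0) (h₁ : deriv τ t₀ = 0) :
    iteratedDeriv 2 τ t₀ = 0 := by
  contrapose! ht₀
  exact eq_zero_of_map_eq_smul_deriv_add (A := LinearMap.mulLeft ℝ Γ - LinearMap.mulRight ℝ Γ) h.1
    (contDiff_linearMap_comp tracelessPart hV) (h.commutator_tracelessPart hV) two_pos h₀ h₁ ht₀

theorem eq_zero_of_double_zero (h : IsSymmetryPair n V τ Γ) (hV : ContDiff ℝ ∞ V) {t₀ : ℝ}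
    (ht₀ : ∀ c : ℝ, V t₀ ≠ c • (1 : Matrix (Fin n) (Fin n) ℝ)) (h₀ : τ t₀ = 0)
    (h₁ : deriv τ t₀ = 0) : τ = 0 := by
  have : NeZero n := ⟨by rintro rfl; exact ht₀ 0 (Subsingleton.elim _ _)⟩
  have h_traceless : tracelessPart (V t₀) ≠ 0 := fun h_zero => ht₀ _ (sub_eq_zero.1 h_zero)
  exact h.eq_zero_of_triple_zero hV h₀ h₁ (h.iteratedDeriv_two_eq_zero hV h_traceless h₀ h₁)

theorem zero : IsSymmetryPair n V 0 0 :=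
  ⟨contDiff_const, fun t => by simp⟩

theorem add {σ : ℝ → ℝ} {Δ : Matrix (Fin n) (Fin n) ℝ} (hτ : IsSymmetryPair n V τ Γ)
    (hσ : IsSymmetryPair n V σ Δ) : IsSymmetryPair n V (τ + σ) (Γ + Δ) := by
  refine ⟨hτ.1.add hσ.1, fun t => ?_⟩
  rw [Pi.add_apply, add_smul, hτ.2 t, hσ.2 t,
    deriv_add (hτ.1.differentiable (by simp) t) (hσ.1.differentiable (by simp) t),
    iteratedDeriv_add (contDiff_infty.1 hτ.1 3).contDiffAt (contDiff_infty.1 hσ.1 3).contDiffAt,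
    add_mul, mul_add]
  module

theorem const_smul (h : IsSymmetryPair n V τ Γ) (r : ℝ) : IsSymmetryPair n V (r • τ) (r • Γ) := by
  refine ⟨h.1.const_smul r, fun t => ?_⟩
  rw [Pi.smul_apply, smul_assoc, h.2 t, deriv_const_smul_field, iteratedDeriv_const_smul_field,
    smul_mul_assoc, mul_smul_comm]
  module

end IsSymmetryPair

section TComponents

variable {n : ℕ} {V : ℝ → Matrix (Fin n) (Fin n) ℝ}

variable (V) in
/-- The space of `t`-components of the essential Lie symmetries of `x_tt = V(t)x`. -/
def tComponents : Submodule ℝ (ℝ → ℝ) where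
  carrier := {τ | ∃ Γ, IsSymmetryPair n V τ Γ}
  zero_mem' := ⟨0, .zero⟩
  add_mem' := fun ⟨_, hτ⟩ ⟨_, hσ⟩ => ⟨_, hτ.add hσ⟩
  smul_mem' := fun r _ ⟨_, hτ⟩ => ⟨_, hτ.const_smul r⟩

theorem differentiable_of_mem_tComponents {τ : ℝ → ℝ} (hτ : τ ∈ tComponents V) :
    Differentiable ℝ τ :=
  hτ.choose_spec.1.differentiable (by simp)

variable (V) in
/-- The first-order jet `(τ(t₀), τ'(t₀))` of a `t`-component `τ`, which determines `τ` when
`V(t₀)` is not scalar. -/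
noncomputable def jetAt (t₀ : ℝ) : tComponents V →ₗ[ℝ] ℝ × ℝ where
  toFun τ := (τ.1 t₀, deriv τ.1 t₀)
  map_add' τ σ := Prod.ext rfl <| deriv_add (differentiable_of_mem_tComponents τ.2 t₀)
    (differentiable_of_mem_tComponents σ.2 t₀)
  map_smul' r τ := Prod.ext rfl <| deriv_const_smul_field r τ.1

theorem jetAt_injective (hV : ContDiff ℝ ∞ V) {t₀ : ℝ}
    (ht₀ : ∀ c : ℝ, V t₀ ≠ c • (1 : Matrix (Fin n) (Fin n) ℝ)) :
    Function.Injective (jetAt V t₀) := by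
  rw [injective_iff_map_eq_zero]
  rintro ⟨τ, Γ, h⟩ h_jet
  obtain ⟨h₀, h₁⟩ := Prod.ext_iff.1 h_jet
  exact Subtype.ext (h.eq_zero_of_double_zero hV ht₀ h₀ h₁)

theorem rank_tComponents_le_two (hV : ContDiff ℝ ∞ V) {t₀ : ℝ}
    (ht₀ : ∀ c : ℝ, V t₀ ≠ c • (1 : Matrix (Fin n) (Fin n) ℝ)) :
    Module.rank ℝ (tComponents V) ≤ 2 :=
  calc Module.rank ℝ (tComponents V) ≤ Module.rank ℝ (ℝ × ℝ) :=
        LinearMap.rank_le_of_injective _ (jetAt_injective hV ht₀)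
    _ = 2 := by rw [rank_prod']; simp [one_add_one_eq_two]

end TComponents

/-- The space of `t`-components of essential Lie-symmetry vector fields of a system
`x_tt = V(t)x` with `V(t₀)` not a multiple of the identity has dimension at most `2`:
any three such `t`-components are linearly dependent. -/
theorem t_components_linearly_dependent (n : ℕ) (hn : 2 ≤ n)
    (V : ℝ → Matrix (Fin n) (Fin n) ℝ)
    (hV : ∀ i j : Fin n, ContDiff ℝ (⊤ : ℕ∞) fun t => V t i j)
    (t₀ : ℝ) (ht₀ : ∀ c : ℝ, V t₀ ≠ c • (1 : Matrix (Fin n) (Fin n) ℝ))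
    (τ : Fin 3 → ℝ → ℝ) (Γ : Fin 3 → Matrix (Fin n) (Fin n) ℝ)
    (hsym : ∀ i, IsSymmetryPair n V (τ i) (Γ i)) :
    ¬ LinearIndependent ℝ τ := by
  intro hτ
  have h_indep : LinearIndependent ℝ fun i => (⟨τ i, Γ i, hsym i⟩ : tComponents V) :=
    .of_comp (tComponents V).subtype hτ
  have h_three := h_indep.cardinal_le_rank.trans (rank_tComponents_le_two (contDiff_matrix hV) ht₀)
  norm_num at h_three
end

section
/- Let n ≥ 2 and let J ∈ M_n(ℝ) be the matrix whose (1,2) entry equals 1 and all of whose other entries equal 0. Then the real vector space of pairs (τ, Γ), with τ : ℝ → ℝ smooth and Γ ∈ M_n(ℝ) constant, satisfying [Γ, J] − 2τ'(t)·J + (1/2)τ'''(t)·E = 0 for all t ∈ ℝ (the symmetry-pair condition for the constant matrix-valued function V ≡ J), has dimension exactly n² − 2n + 4. (This shows that the submaximum bound n² + 4 for the dimension of the maximal Lie invariance algebra is attained by the system x¹_tt = x², x²_tt = 0, …, xⁿ_tt = 0.) -/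
/-- The `n × n` matrix `J` whose `(1,2)` entry (indices `0, 1` in `Fin n`) equals `1`
and all of whose other entries equal `0`. -/
def Jmat (n : ℕ) : Matrix (Fin n) (Fin n) ℝ :=
  Matrix.of fun i j => if (i : ℕ) = 0 ∧ (j : ℕ) = 1 then (1 : ℝ) else 0

/-- A pair `(τ, Γ)`, with `τ : ℝ → ℝ` smooth and `Γ` a constant matrix, satisfying the
symmetry-pair condition `[Γ, J] − 2τ'(t)·J + (1/2)τ'''(t)·E = 0` for the constant
matrix-valued function `V ≡ J`. -/
def IsJSymmetryPair (n : ℕ) (q : (ℝ → ℝ) × Matrix (Fin n) (Fin n) ℝ) : Prop :=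
  ContDiff ℝ (⊤ : ℕ∞) q.1 ∧
    ∀ t : ℝ,
      (q.2 * Jmat n - Jmat n * q.2) - (2 * deriv q.1 t) • Jmat n
        + (iteratedDeriv 3 q.1 t / 2) • (1 : Matrix (Fin n) (Fin n) ℝ) = 0

/-!
Taking traces in the symmetry-pair equation kills `[Γ, J]` and `J`, so `τ''' = 0`. What remains is
`[Γ, J] = 2τ'(t) J`, so `τ'` is constant, `Γ` normalizes the line `ℝJ`, and `(τ, Γ)` is recovered
from `(τ(0), Γ)`. Hence the dimension is one more than that of the normalizer of `ℝJ`. As `J` is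
the matrix unit `E₁₂`, a matrix lies in this normalizer exactly when the off-diagonal entries of
its first column and of its second row vanish; these are `2(n - 1) - 1` entries, as `(2, 1)` is
counted twice.
-/

open Matrix Module Submodule

attribute [local instance] LieRing.ofAssociativeRing

section LineNormalizer

variable {R : Type*} [CommRing R]

variable (R) in
/-- The normalizer of the line `R ∙ x` in a Lie algebra: the elements whose adjoint action sends
`x` to a multiple of itself. -/
def lineNormalizer {L : Type*} [LieRing L] [LieAlgebra R L] (x : L) : Submodule R L where
  carrier := {y | ⁅y, x⁆ ∈ R ∙ x}
  add_mem' hy hz := by simpa only [Set.mem_ofPred_eq, add_lie] using add_mem hy hz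
  zero_mem' := by simp only [Set.mem_ofPred_eq, zero_lie, zero_mem]
  smul_mem' c y hy := by simpa only [Set.mem_ofPred_eq, smul_lie] using smul_mem _ c hy

lemma mem_lineNormalizer_iff {L : Type*} [LieRing L] [LieAlgebra R L] {x y : L} :
    y ∈ lineNormalizer R x ↔ ∃ c : R, c • x = ⁅y, x⁆ :=
  mem_span_singleton

variable {ι : Type*} [Fintype ι] [DecidableEq ι]

lemma lie_single_one_apply (Γ : Matrix ι ι R) (a b i j : ι) :
    ⁅Γ, single a b (1 : R)⁆ i j = (if j = b then Γ i a else 0) - (if i = a then Γ b j else 0) := by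
  simp [Ring.lie_def, mul_apply, single_apply, ite_and, eq_comm]

/-- The off-diagonal entries of column `a` and of row `b`. These are the entries that vanish for
every matrix normalizing the line spanned by the matrix unit `single a b 1`. -/
def crossEntries (a b : ι) : Finset (ι × ι) :=
  (Finset.univ.erase a ×ˢ {a}) ∪ ({b} ×ˢ Finset.univ.erase b)

lemma mem_crossEntries_iff {a b i j : ι} :
    (i, j) ∈ crossEntries a b ↔ i ≠ a ∧ j = a ∨ i = b ∧ j ≠ b := by
  grind [crossEntries]

lemma card_crossEntries_add_three {a b : ι} (hab : a ≠ b) :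
    (crossEntries a b).card + 3 = 2 * Fintype.card ι := by
  have inter_eq : (Finset.univ.erase a ×ˢ {a}) ∩ ({b} ×ˢ Finset.univ.erase b) = {(b, a)} := by
    ext ⟨i, j⟩
    simp only [Finset.mem_inter, Finset.mem_product, Finset.mem_erase, Finset.mem_univ,
      Finset.mem_singleton, Prod.mk.injEq]
    grind
  have card_union := Finset.card_union_add_card_inter
    (Finset.univ.erase a ×ˢ {a}) ({b} ×ˢ Finset.univ.erase b)
  have one_lt_card : 1 < Fintype.card ι := Fintype.one_lt_card_iff.mpr ⟨a, b, hab⟩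
  simp only [inter_eq, Finset.card_product, Finset.card_singleton, Finset.mem_univ,
    Finset.card_erase_of_mem, Finset.card_univ] at card_union
  rw [crossEntries]
  omega

lemma mem_lineNormalizer_single_one_iff {a b : ι} {Γ : Matrix ι ι R} :
    Γ ∈ lineNormalizer R (single a b (1 : R)) ↔ ∀ i j, (i, j) ∈ crossEntries a b → Γ i j = 0 := by
  simp only [mem_lineNormalizer_iff, mem_crossEntries_iff]
  constructor
  · rintro ⟨c, hc⟩ i j (⟨hi, rfl⟩ | ⟨rfl, hj⟩)
    · have entry := congrFun₂ hc i b
      simpa [lie_single_one_apply, hi, hi.symm] using entry.symm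
    · have entry := congrFun₂ hc a j
      simpa [lie_single_one_apply, hj, hj.symm] using entry.symm
  · intro hΓ
    refine ⟨Γ a a - Γ b b, ?_⟩
    ext i j
    rw [lie_single_one_apply, Matrix.smul_apply, single_apply, smul_eq_mul]
    grind

lemma stdBasis_repr_apply {m n : Type*} [Fintype m] [Finite n] {S : Type*} [Semiring S]
    (M : Matrix m n S) (i : m) (j : n) : (stdBasis S m n).repr M (i, j) = M i j := by
  simp [stdBasis]

lemma lineNormalizer_single_one_eq_span (a b : ι) :
    lineNormalizer R (single a b (1 : R)) = span R (stdBasis R ι ι '' (crossEntries a b)ᶜ) := by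
  ext Γ
  rw [mem_lineNormalizer_single_one_iff, Basis.mem_span_image, Finsupp.support_subset_iff]
  simp [stdBasis_repr_apply]

lemma finrank_lineNormalizer_single_one [Nontrivial R] {a b : ι} (hab : a ≠ b) :
    finrank R (lineNormalizer R (single a b (1 : R))) =
      Fintype.card ι ^ 2 - 2 * Fintype.card ι + 3 := by
  have indep : LinearIndependent R fun p : ((crossEntries a b)ᶜ : Finset _) =>
      stdBasis R ι ι p :=
    (stdBasis R ι ι).linearIndependent.comp _ Subtype.val_injective
  have finrank_eq : finrank R (lineNormalizer R (single a b (1 : R))) =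
      Fintype.card ι ^ 2 - (crossEntries a b).card := by
    rw [lineNormalizer_single_one_eq_span, ← Finset.coe_compl, Set.image_eq_range]
    exact (finrank_span_eq_card indep).trans (by simp [sq])
  have two_le : 2 ≤ Fintype.card ι := Fintype.one_lt_card_iff.mpr ⟨a, b, hab⟩
  have two_mul_le_sq : 2 * Fintype.card ι ≤ Fintype.card ι ^ 2 := by nlinarith
  have card_cross := card_crossEntries_add_three hab
  omega

end LineNormalizer

section SymmetryPairs

lemma eq_add_smul_of_deriv_eq {𝕜 F : Type*} [RCLike 𝕜] [NormedAddCommGroup F] [NormedSpace 𝕜 F]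
    {f : 𝕜 → F} {c : F} (hf : Differentiable 𝕜 f) (hc : ∀ x, deriv f x = c) (x : 𝕜) :
    f x = f 0 + x • c := by
  have hasDerivAt_sub (y : 𝕜) : HasDerivAt (fun z => f z - z • c) 0 y := by
    simpa [hc y] using (hf y).hasDerivAt.fun_sub ((hasDerivAt_id' y).smul_const c)
  have sub_eq : f x - x • c = f 0 - (0 : 𝕜) • c :=
    is_const_of_deriv_eq_zero (fun y => (hasDerivAt_sub y).differentiableAt)
      (fun y => (hasDerivAt_sub y).deriv) x 0
  rwa [zero_smul, sub_zero, sub_eq_iff_eq_add] at sub_eq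

variable {ι : Type*} [Fintype ι] [DecidableEq ι]

/-- The space of symmetry pairs `(τ, Γ)` of the constant matrix-valued function with value `V`,
for which the term `τ V'` of the symmetry-pair condition is zero. -/
def symmetryPairs (V : Matrix ι ι ℝ) : Submodule ℝ ((ℝ → ℝ) × Matrix ι ι ℝ) where
  carrier := {q | ContDiff ℝ (⊤ : ℕ∞) q.1 ∧ ∀ t : ℝ,
    ⁅q.2, V⁆ - (2 * deriv q.1 t) • V + (iteratedDeriv 3 q.1 t / 2) • (1 : Matrix ι ι ℝ) = 0}
  add_mem' := by
    rintro ⟨σ, Γ⟩ ⟨τ, Δ⟩ ⟨hσ, hΓ⟩ ⟨hτ, hΔ⟩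
    refine ⟨hσ.add hτ, fun t => ?_⟩
    have deriv_eq : deriv (σ + τ) t = deriv σ t + deriv τ t :=
      deriv_add (hσ.differentiable (by simp) t) (hτ.differentiable (by simp) t)
    have iteratedDeriv_eq :
        iteratedDeriv 3 (σ + τ) t = iteratedDeriv 3 σ t + iteratedDeriv 3 τ t :=
      iteratedDeriv_add (contDiff_infty.mp hσ 3).contDiffAt (contDiff_infty.mp hτ 3).contDiffAt
    have sum_eq := congrArg₂ (· + ·) (hΓ t) (hΔ t)
    simp only [add_zero] at sum_eq
    rw [← sum_eq]
    simp only [Prod.mk_add_mk, deriv_eq, iteratedDeriv_eq, add_lie]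
    module
  zero_mem' := ⟨contDiff_const, fun t => by simp⟩
  smul_mem' := by
    rintro c ⟨τ, Γ⟩ ⟨hτ, hΓ⟩
    refine ⟨contDiff_const.smul hτ, fun t => ?_⟩
    have scaled_eq := congrArg (c • ·) (hΓ t)
    simp only [smul_zero] at scaled_eq
    rw [← scaled_eq]
    simp only [Prod.smul_mk, deriv_const_smul_field, iteratedDeriv_const_smul_field, smul_lie,
      smul_eq_mul]
    module

variable {V : Matrix ι ι ℝ} {q : (ℝ → ℝ) × Matrix ι ι ℝ}

lemma iteratedDeriv_three_eq_zero_of_mem_symmetryPairs [Nonempty ι] (htr : V.trace = 0)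
    (hq : q ∈ symmetryPairs V) (t : ℝ) : iteratedDeriv 3 q.1 t = 0 := by
  have trace_eq := congrArg trace (hq.2 t)
  simpa [htr] using trace_eq

lemma lie_eq_smul_of_mem_symmetryPairs (htr : V.trace = 0) (hq : q ∈ symmetryPairs V) (t : ℝ) :
    ⁅q.2, V⁆ = (2 * deriv q.1 t) • V := by
  cases isEmpty_or_nonempty ι
  · exact Subsingleton.elim _ _
  · have eq_zero := hq.2 t
    rwa [iteratedDeriv_three_eq_zero_of_mem_symmetryPairs htr hq, zero_div, zero_smul, add_zero,
      sub_eq_zero] at eq_zero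

lemma eq_add_mul_of_mem_symmetryPairs (hV : V ≠ 0) (htr : V.trace = 0)
    (hq : q ∈ symmetryPairs V) {c : ℝ} (hc : ⁅q.2, V⁆ = (2 * c) • V) (t : ℝ) :
    q.1 t = q.1 0 + c * t := by
  have deriv_eq (s : ℝ) : deriv q.1 s = c := by
    have two_mul_eq : 2 * deriv q.1 s = 2 * c :=
      smul_left_injective ℝ hV ((lie_eq_smul_of_mem_symmetryPairs htr hq s).symm.trans hc)
    linarith
  rw [eq_add_smul_of_deriv_eq (hq.1.differentiable (by simp)) deriv_eq t, smul_eq_mul, mul_comm]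

lemma affine_mem_symmetryPairs {Γ : Matrix ι ι ℝ} {c : ℝ} (hΓ : ⁅Γ, V⁆ = (2 * c) • V) (x : ℝ) :
    (fun t => x + c * t, Γ) ∈ symmetryPairs V := by
  refine ⟨by fun_prop, fun t => ?_⟩
  have deriv_eq : deriv (fun t => x + c * t) = fun _ => c := by
    ext
    simp
  simp [iteratedDeriv_succ', deriv_eq, hΓ]

/-- The map `(τ, Γ) ↦ (τ 0, Γ)`, which parametrizes the symmetry pairs of a nonzero traceless
matrix `V` by a number and an element of the normalizer of the line `ℝ ∙ V`. -/
def symmetryPairsInitialData (htr : V.trace = 0) :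
    symmetryPairs V →ₗ[ℝ] ℝ × lineNormalizer ℝ V where
  toFun q := (q.1.1 0, ⟨q.1.2,
    mem_lineNormalizer_iff.mpr ⟨_, (lie_eq_smul_of_mem_symmetryPairs htr q.2 0).symm⟩⟩)
  map_add' _ _ := rfl
  map_smul' _ _ := rfl

lemma symmetryPairsInitialData_injective (hV : V ≠ 0) (htr : V.trace = 0) :
    Function.Injective (symmetryPairsInitialData htr) := by
  rintro ⟨⟨σ, Γ⟩, hσ⟩ ⟨⟨τ, Δ⟩, hτ⟩ h
  simp only [symmetryPairsInitialData, LinearMap.coe_mk, AddHom.coe_mk, Prod.mk.injEq,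
    Subtype.mk.injEq] at h
  obtain ⟨initial_eq, rfl⟩ := h
  have lie_eq := lie_eq_smul_of_mem_symmetryPairs htr hσ 0
  have σ_eq_τ : σ = τ := by
    ext t
    calc
      σ t = σ 0 + deriv σ 0 * t := eq_add_mul_of_mem_symmetryPairs hV htr hσ lie_eq t
      _ = τ 0 + deriv σ 0 * t := by rw [initial_eq]
      _ = τ t := (eq_add_mul_of_mem_symmetryPairs hV htr hτ lie_eq t).symm
  subst σ_eq_τ
  rfl

lemma symmetryPairsInitialData_surjective (htr : V.trace = 0) :
    Function.Surjective (symmetryPairsInitialData htr) := by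
  rintro ⟨x, Γ, hΓ⟩
  obtain ⟨c, hc⟩ := mem_lineNormalizer_iff.mp hΓ
  have lie_eq : ⁅Γ, V⁆ = (2 * (c / 2)) • V := by rw [← hc, mul_div_cancel₀ c two_ne_zero]
  exact ⟨⟨_, affine_mem_symmetryPairs lie_eq x⟩, by simp [symmetryPairsInitialData]⟩

lemma finrank_symmetryPairs (hV : V ≠ 0) (htr : V.trace = 0) :
    finrank ℝ (symmetryPairs V) = finrank ℝ (lineNormalizer ℝ V) + 1 := by
  have equiv := LinearEquiv.ofBijective (symmetryPairsInitialData htr)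
    ⟨symmetryPairsInitialData_injective hV htr, symmetryPairsInitialData_surjective htr⟩
  rw [equiv.finrank_eq, finrank_prod, finrank_self, add_comm]

end SymmetryPairs

theorem symmetry_pairs_of_J_dimension_general {ι : Type*} [Fintype ι] [DecidableEq ι] {a b : ι}
    (hab : a ≠ b) :
    finrank ℝ (symmetryPairs (single a b (1 : ℝ))) =
      Fintype.card ι ^ 2 - 2 * Fintype.card ι + 4 := by
  have single_ne_zero : single a b (1 : ℝ) ≠ 0 := fun h => by simpa using congrFun₂ h a b
  rw [finrank_symmetryPairs single_ne_zero (trace_single_eq_of_ne a b 1 hab),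
    finrank_lineNormalizer_single_one hab]

lemma Jmat_eq_single {n : ℕ} (hn : 2 ≤ n) : Jmat n = single ⟨0, by omega⟩ ⟨1, by omega⟩ 1 := by
  ext i j
  simp [Jmat, single_apply, Fin.ext_iff, eq_comm]

lemma finrank_symmetryPairs_Jmat {n : ℕ} (hn : 2 ≤ n) :
    finrank ℝ (symmetryPairs (Jmat n)) = n ^ 2 - 2 * n + 4 := by
  rw [Jmat_eq_single hn, symmetry_pairs_of_J_dimension_general (by simp), Fintype.card_fin]

lemma exists_linearIndependent_span_eq_of_finrank_eq {R M : Type*} [Ring R] [StrongRankCondition R]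
    [AddCommGroup M] [Module R M] {W : Submodule R M} [Module.Free R W] [Module.Finite R W]
    {d : ℕ} (hd : finrank R W = d) :
    ∃ p : Fin d → M, (∀ i, p i ∈ W) ∧ LinearIndependent R p ∧ span R (Set.range p) = W := by
  let basis := finBasisOfFinrankEq R W hd
  refine ⟨W.subtype ∘ basis, fun i => (basis i).2,
    basis.linearIndependent.map' W.subtype W.ker_subtype, ?_⟩
  rw [Set.range_comp, span_image, basis.span_eq, map_subtype_top]

/-- The space of symmetry pairs of the constant matrix-valued function `V ≡ J` has
dimension exactly `n² − 2n + 4`: there are `n² − 2n + 4` linearly independent symmetry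
pairs spanning all symmetry pairs. -/
theorem symmetry_pairs_of_J_dimension (n : ℕ) (hn : 2 ≤ n) :
    ∃ p : Fin (n ^ 2 - 2 * n + 4) → (ℝ → ℝ) × Matrix (Fin n) (Fin n) ℝ,
      (∀ i, IsJSymmetryPair n (p i)) ∧ LinearIndependent ℝ p ∧
        ∀ q, IsJSymmetryPair n q → q ∈ Submodule.span ℝ (Set.range p) := by
  have finrank_eq := finrank_symmetryPairs_Jmat hn
  have : Module.Finite ℝ (symmetryPairs (Jmat n)) := finite_of_finrank_pos (by omega)
  obtain ⟨p, mem, indep, span_eq⟩ := exists_linearIndependent_span_eq_of_finrank_eq finrank_eq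
  exact ⟨p, mem, indep, fun q hq => span_eq.ge hq⟩
end

section
/- Let n ≥ 1, let T : ℝ → ℝ be three times differentiable with T'(t) > 0 for all t, let C ∈ M_n(ℝ) be invertible, and let V : ℝ → M_n(ℝ). Suppose x : ℝ → ℝⁿ is twice differentiable and satisfies x''(t) = V(t)·x(t) for all t, and suppose y : ℝ → ℝⁿ is twice differentiable and satisfies y(T(t)) = √(T'(t)) · (C·x(t)) for all t. Then for all t ∈ ℝ: y''(T(t)) = Ṽ(t)·y(T(t)), where Ṽ(t) := T'(t)^{-2} · C·V(t)·C^{-1} + ((2·T'(t)·T'''(t) − 3·T''(t)²) / (4·T'(t)⁴)) · E. (This verifies that the transformations t̃ = T(t), x̃ = √(T') C x are equivalence transformations of the class of systems x_tt = V(t)x, mapping solutions of x_tt = V x to solutions of x̃_t̃t̃ = Ṽ x̃.) -/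
/-!
With `s = √T'` and `u = C x`, one differentiation of `y ∘ T = s • u` gives
`y' ∘ T = (s' / s²) • u + s⁻¹ • u'`. On differentiating again the two `u'` terms cancel; this is
what singles out the multiplier `√T'`, and what remains is
`T' • (y'' ∘ T) = s⁻¹ • u'' + ((s s'' - 2 s'²) / s³) • u`.
Substituting `s = √T'` turns the coefficient of `u` into the Schwarzian derivative of `T`, up to
elementary factors, and the equation for `x` replaces `u'' = C V x` by `C V C⁻¹ u`.
-/

open Filter Topology

section LiouvilleTransformation

variable {𝕜 : Type*} [NontriviallyNormedField 𝕜] {F : Type*} [NormedAddCommGroup F]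
  [NormedSpace 𝕜 F]

theorem hasDerivAt_eq_of_comp_eventuallyEq_smul {T s : 𝕜 → 𝕜} {u y : 𝕜 → F} {t s₁ : 𝕜}
    {u₁ y₁ : F} (hT : HasDerivAt T (s t ^ 2) t) (hs : HasDerivAt s s₁ t)
    (hu : HasDerivAt u u₁ t) (hy : HasDerivAt y y₁ (T t)) (hst : s t ≠ 0)
    (hyT : ∀ᶠ r in 𝓝 t, y (T r) = s r • u r) :
    y₁ = (s₁ / s t ^ 2) • u t + (s t)⁻¹ • u₁ := by
  have hchain : s t ^ 2 • y₁ = s t • u₁ + s₁ • u t :=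
    (hy.scomp t hT).unique ((hs.smul hu).congr_of_eventuallyEq hyT)
  rw [← inv_smul_smul₀ (pow_ne_zero 2 hst) y₁, hchain]
  match_scalars <;> field_simp

theorem hasDerivAt_div_sq_smul_add_inv_smul {s s₁ : 𝕜 → 𝕜} {u u₁ : 𝕜 → F} {t s₂ : 𝕜} {u₂ : F}
    (hs : HasDerivAt s (s₁ t) t) (hs₁ : HasDerivAt s₁ s₂ t)
    (hu : HasDerivAt u (u₁ t) t) (hu₁ : HasDerivAt u₁ u₂ t) (hst : s t ≠ 0) :
    HasDerivAt (fun r => (s₁ r / s r ^ 2) • u r + (s r)⁻¹ • u₁ r)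
      ((s t)⁻¹ • u₂ + ((s t * s₂ - 2 * s₁ t ^ 2) / s t ^ 3) • u t) t := by
  have hcoeff := hs₁.fun_div (hs.fun_pow 2) (pow_ne_zero 2 hst)
  refine ((hcoeff.fun_smul hu).fun_add ((hs.fun_inv hst).fun_smul hu₁)).congr_deriv ?_
  match_scalars <;> field_simp <;> ring

theorem second_hasDerivAt_eq_of_comp_eventuallyEq_smul {T s s₁ : 𝕜 → 𝕜} {u u₁ y y₁ : 𝕜 → F}
    {t s₂ : 𝕜} {u₂ y₂ : F}
    (hT : ∀ᶠ r in 𝓝 t, HasDerivAt T (s r ^ 2) r)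
    (hs : ∀ᶠ r in 𝓝 t, HasDerivAt s (s₁ r) r) (hs₁ : HasDerivAt s₁ s₂ t)
    (hu : ∀ᶠ r in 𝓝 t, HasDerivAt u (u₁ r) r) (hu₁ : HasDerivAt u₁ u₂ t)
    (hy : ∀ᶠ r in 𝓝 t, HasDerivAt y (y₁ (T r)) (T r)) (hy₁ : HasDerivAt y₁ y₂ (T t))
    (hst : s t ≠ 0) (hyT : ∀ᶠ r in 𝓝 t, y (T r) = s r • u r) :
    y₂ = (1 / (s t ^ 2) ^ 2) • s t • u₂
      + ((s t * s₂ - 2 * s₁ t ^ 2) / s t ^ 6) • s t • u t := by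
  have hs_ne : ∀ᶠ r in 𝓝 t, s r ≠ 0 := hs.self_of_nhds.continuousAt.eventually_ne hst
  have hfirst : ∀ᶠ r in 𝓝 t, y₁ (T r) = (s₁ r / s r ^ 2) • u r + (s r)⁻¹ • u₁ r := by
    filter_upwards [hT, hs, hu, hy, hs_ne, hyT.eventually_nhds] with r hTr hsr hur hyr hr hyTr
    exact hasDerivAt_eq_of_comp_eventuallyEq_smul hTr hsr hur hyr hr hyTr
  have hsecond : s t ^ 2 • y₂
      = (s t)⁻¹ • u₂ + ((s t * s₂ - 2 * s₁ t ^ 2) / s t ^ 3) • u t :=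
    (hy₁.scomp t hT.self_of_nhds).unique <|
      (hasDerivAt_div_sq_smul_add_inv_smul hs.self_of_nhds hs₁ hu.self_of_nhds hu₁
        hst).congr_of_eventuallyEq hfirst
  rw [← inv_smul_smul₀ (pow_ne_zero 2 hst) y₂, hsecond]
  match_scalars <;> field_simp

end LiouvilleTransformation

section SqrtMultiplier

theorem hasDerivAt_div_two_mul_sqrt {f f₁ : ℝ → ℝ} {t f₂ : ℝ} (hf : HasDerivAt f (f₁ t) t)
    (hf₁ : HasDerivAt f₁ f₂ t) (hpos : 0 < f t) :
    HasDerivAt (fun r => f₁ r / (2 * √(f r)))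
      ((2 * f t * f₂ - f₁ t ^ 2) / (4 * f t * √(f t))) t := by
  have hsqrt : √(f t) ≠ 0 := (Real.sqrt_pos.2 hpos).ne'
  refine (hf₁.fun_div ((hf.sqrt hpos.ne').const_mul 2)
    (mul_ne_zero two_ne_zero hsqrt)).congr_deriv ?_
  have hsq : √(f t) ^ 2 = f t := Real.sq_sqrt hpos.le
  field_simp
  rw [hsq]
  ring

variable {F : Type*} [NormedAddCommGroup F] [NormedSpace ℝ F]

theorem second_hasDerivAt_eq_of_comp_eventuallyEq_sqrt_smul {T T₁ T₂ : ℝ → ℝ}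
    {u u₁ y y₁ : ℝ → F} {t T₃ : ℝ} {u₂ y₂ : F}
    (hT : ∀ᶠ r in 𝓝 t, HasDerivAt T (T₁ r) r)
    (hT₁ : ∀ᶠ r in 𝓝 t, HasDerivAt T₁ (T₂ r) r) (hT₂ : HasDerivAt T₂ T₃ t)
    (hpos : 0 < T₁ t)
    (hu : ∀ᶠ r in 𝓝 t, HasDerivAt u (u₁ r) r) (hu₁ : HasDerivAt u₁ u₂ t)
    (hy : ∀ᶠ r in 𝓝 t, HasDerivAt y (y₁ (T r)) (T r)) (hy₁ : HasDerivAt y₁ y₂ (T t))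
    (hyT : ∀ᶠ r in 𝓝 t, y (T r) = √(T₁ r) • u r) :
    y₂ = (1 / T₁ t ^ 2) • √(T₁ t) • u₂
      + ((2 * T₁ t * T₃ - 3 * T₂ t ^ 2) / (4 * T₁ t ^ 4)) • √(T₁ t) • u t := by
  have hpos_near : ∀ᶠ r in 𝓝 t, 0 < T₁ r :=
    hT₁.self_of_nhds.continuousAt.eventually_const_lt hpos
  have hT_sq : ∀ᶠ r in 𝓝 t, HasDerivAt T (√(T₁ r) ^ 2) r := by
    filter_upwards [hT, hpos_near] with r hTr hr
    rwa [Real.sq_sqrt hr.le]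
  have hsqrt : ∀ᶠ r in 𝓝 t, HasDerivAt (fun r => √(T₁ r)) (T₂ r / (2 * √(T₁ r))) r := by
    filter_upwards [hT₁, hpos_near] with r hT₁r hr using hT₁r.sqrt hr.ne'
  have hsqrt_ne : √(T₁ t) ≠ 0 := (Real.sqrt_pos.2 hpos).ne'
  have hsq : √(T₁ t) ^ 2 = T₁ t := Real.sq_sqrt hpos.le
  have hcoeff : (√(T₁ t) * ((2 * T₁ t * T₃ - T₂ t ^ 2) / (4 * T₁ t * √(T₁ t)))
      - 2 * (T₂ t / (2 * √(T₁ t))) ^ 2) / √(T₁ t) ^ 6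
      = (2 * T₁ t * T₃ - 3 * T₂ t ^ 2) / (4 * T₁ t ^ 4) := by
    rw [pow_mul √(T₁ t) 2 3, div_pow, mul_pow, hsq]
    field_simp
    ring
  rw [second_hasDerivAt_eq_of_comp_eventuallyEq_smul hT_sq hsqrt
    (hasDerivAt_div_two_mul_sqrt hT₁.self_of_nhds hT₂ hpos) hu hu₁ hy hy₁ hsqrt_ne hyT,
    hcoeff, hsq]

end SqrtMultiplier

theorem conj_mulVec_mulVec {ι R : Type*} [Fintype ι] [DecidableEq ι] [CommRing R]
    {C : Matrix ι ι R} (hC : IsUnit C.det) (A : Matrix ι ι R) (v : ι → R) :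
    (C * A * C⁻¹).mulVec (C.mulVec v) = C.mulVec (A.mulVec v) := by
  rw [Matrix.mulVec_mulVec, Matrix.nonsing_inv_mul_cancel_right _ _ hC, Matrix.mulVec_mulVec]

/-- `W t` plays the role of `C V(t) C⁻¹`: it is tied to `V t` by an intertwining relation, which
makes sense for a map `C` between different spaces. -/
theorem equivalence_transformation_of_solutions_general {E F : Type*}
    [NormedAddCommGroup E] [NormedSpace ℝ E] [NormedAddCommGroup F] [NormedSpace ℝ F]
    {U : Set ℝ} (hU : IsOpen U) {T T₁ T₂ T₃ : ℝ → ℝ}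
    (hT : ∀ t ∈ U, HasDerivAt T (T₁ t) t)
    (hT₁ : ∀ t ∈ U, HasDerivAt T₁ (T₂ t) t)
    (hT₂ : ∀ t ∈ U, HasDerivAt T₂ (T₃ t) t)
    (hpos : ∀ t ∈ U, 0 < T₁ t)
    (C : E →L[ℝ] F) (V : ℝ → Module.End ℝ E) (W : ℝ → Module.End ℝ F)
    (hVW : ∀ t ∈ U, ∀ v, W t (C v) = C (V t v))
    {x x₁ x₂ : ℝ → E}
    (hx : ∀ t ∈ U, HasDerivAt x (x₁ t) t)
    (hx₁ : ∀ t ∈ U, HasDerivAt x₁ (x₂ t) t)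
    (hxeq : ∀ t ∈ U, x₂ t = V t (x t))
    {y y₁ y₂ : ℝ → F}
    (hy : ∀ t ∈ U, HasDerivAt y (y₁ (T t)) (T t))
    (hy₁ : ∀ t ∈ U, HasDerivAt y₁ (y₂ (T t)) (T t))
    (hyT : ∀ t ∈ U, y (T t) = √(T₁ t) • C (x t)) :
    ∀ t ∈ U, y₂ (T t) =
      ((1 / T₁ t ^ 2) • W t
        + ((2 * T₁ t * T₃ t - 3 * T₂ t ^ 2) / (4 * T₁ t ^ 4)) • (1 : Module.End ℝ F))
        (y (T t)) := by
  intro t ht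
  have hUt : U ∈ 𝓝 t := hU.mem_nhds ht
  have hCx : ∀ r ∈ U, HasDerivAt (fun r => C (x r)) (C (x₁ r)) r :=
    fun r hr => C.hasFDerivAt.comp_hasDerivAt r (hx r hr)
  have hCx₁ : HasDerivAt (fun r => C (x₁ r)) (C (x₂ t)) t :=
    C.hasFDerivAt.comp_hasDerivAt t (hx₁ t ht)
  have hCx₂ : C (x₂ t) = W t (C (x t)) := by rw [hxeq t ht, hVW t ht]
  rw [second_hasDerivAt_eq_of_comp_eventuallyEq_sqrt_smul (eventually_of_mem hUt hT)
    (eventually_of_mem hUt hT₁) (hT₂ t ht) (hpos t ht) (eventually_of_mem hUt hCx) hCx₁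
    (eventually_of_mem hUt hy) (hy₁ t ht) (eventually_of_mem hUt hyT), hCx₂, ← map_smul,
    ← hyT t ht]
  rfl

/-- The transformations `t̃ = T(t)`, `x̃ = √(T'(t)) C x` are equivalence transformations of
the class of systems `x_tt = V(t)x`: they map solutions of `x'' = V x` to solutions of
`y'' = Ṽ y` with `Ṽ = T'⁻² C V C⁻¹ + ((2T'T''' − 3T''²)/(4T'⁴)) E`. -/
theorem equivalence_transformation_of_solutions (n : ℕ) (hn : 1 ≤ n)
    (T T1 T2 T3 : ℝ → ℝ)
    (hT1 : ∀ t, HasDerivAt T (T1 t) t)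
    (hT2 : ∀ t, HasDerivAt T1 (T2 t) t)
    (hT3 : ∀ t, HasDerivAt T2 (T3 t) t)
    (hpos : ∀ t, 0 < T1 t)
    (C : Matrix (Fin n) (Fin n) ℝ) (hC : IsUnit C.det)
    (V : ℝ → Matrix (Fin n) (Fin n) ℝ)
    (x x' x'' : ℝ → Fin n → ℝ)
    (hx1 : ∀ t, HasDerivAt x (x' t) t)
    (hx2 : ∀ t, HasDerivAt x' (x'' t) t)
    (hxeq : ∀ t, x'' t = (V t).mulVec (x t))
    (y y' y'' : ℝ → Fin n → ℝ)
    (hy1 : ∀ t, HasDerivAt y (y' t) t)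
    (hy2 : ∀ t, HasDerivAt y' (y'' t) t)
    (hyT : ∀ t, y (T t) = Real.sqrt (T1 t) • C.mulVec (x t)) :
    ∀ t : ℝ, y'' (T t) =
      ((1 / (T1 t) ^ 2) • (C * V t * C⁻¹)
        + ((2 * T1 t * T3 t - 3 * (T2 t) ^ 2) / (4 * (T1 t) ^ 4)) •
            (1 : Matrix (Fin n) (Fin n) ℝ)).mulVec (y (T t)) := by
  intro t
  rw [Matrix.add_mulVec, Matrix.smul_mulVec, Matrix.smul_mulVec, Matrix.one_mulVec]
  exact equivalence_transformation_of_solutions_general isOpen_univ (fun r _ => hT1 r)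
    (fun r _ => hT2 r) (fun r _ => hT3 r) (fun r _ => hpos r) C.toLin'.toContinuousLinearMap
    (fun r => (V r).toLin') (fun r => (C * V r * C⁻¹).toLin')
    (fun r _ => conj_mulVec_mulVec hC (V r)) (fun r _ => hx1 r) (fun r _ => hx2 r)
    (fun r _ => hxeq r) (fun r _ => hy1 (T r)) (fun r _ => hy2 (T r)) (fun r _ => hyT r)
    t (Set.mem_univ t)
end

section
/- Let n ≥ 1, let A : ℝ → M_n(ℝ) be differentiable with derivative A', let B : ℝ → M_n(ℝ) and f : ℝ → ℝⁿ, and let H : ℝ → M_n(ℝ) be differentiable with H(t) invertible for every t and H'(t) = −(1/2)·H(t)·A(t) for all t. Suppose x, h : ℝ → ℝⁿ are twice differentiable solutions of the system z''(t) = A(t)z'(t) + B(t)z(t) + f(t). Then y(t) := H(t)·(x(t) − h(t)) is twice differentiable and satisfies y''(t) = H(t)·(B(t) − (1/2)A'(t) + (1/4)A(t)²)·H(t)^{-1}·y(t) for all t ∈ ℝ. (This is the paper's reduction, by an equivalence transformation with h a particular solution and H solving H_t + (1/2)HA = 0, of any normal linear system x_tt = A x_t + B x + f to a homogeneous system x̃_tt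 = Ṽ(t) x̃ with Ṽ = H(B − (1/2)A_t + (1/4)A²)H^{-1}.) -/
/-!
Half of `A` acts as a connection: with `C = A / 2`, the equation `H' = -H C` turns differentiation
of `H u` into `(H u)' = H (u' - C u)`. Applying this twice to a solution of `u'' = 2 C u' + B u`
cancels the first-order terms, leaving `(H u)'' = H (B - C' + C²) u`. The forcing term drops out
because `u = x - h` is a difference of two solutions.
-/

open Matrix

section MovingFrame

variable {𝕜 R m ι : Type*} [NontriviallyNormedField 𝕜] [NormedRing R] [NormedAlgebra 𝕜 R]
  [Finite m] [Fintype ι] {t : 𝕜}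

theorem hasDerivAt_mulVec {M : 𝕜 → Matrix m ι R} {M' : Matrix m ι R} {u : 𝕜 → ι → R} {u' : ι → R}
    (hM : ∀ i j, HasDerivAt (fun s => M s i j) (M' i j) t) (hu : HasDerivAt u u' t) :
    HasDerivAt (fun s => M s *ᵥ u s) (M' *ᵥ u t + M t *ᵥ u') t := by
  cases nonempty_fintype m
  rw [hasDerivAt_pi] at hu ⊢
  intro i
  have entry_deriv := HasDerivAt.fun_sum fun j (_ : j ∈ Finset.univ) => (hM i j).fun_mul (hu j)
  simpa only [mulVec, dotProduct, Pi.add_apply, Finset.sum_add_distrib] using entry_deriv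

theorem hasDerivAt_sub_of_solutions {A B : Matrix ι ι R} {f : ι → R} {x x' h h' : 𝕜 → ι → R}
    (hx' : HasDerivAt x' (A *ᵥ x' t + B *ᵥ x t + f) t)
    (hh' : HasDerivAt h' (A *ᵥ h' t + B *ᵥ h t + f) t) :
    HasDerivAt (x' - h') (A *ᵥ (x' - h') t + B *ᵥ (x - h) t) t := by
  have forcing_cancels :
      A *ᵥ (x' - h') t + B *ᵥ (x - h) t =
        (A *ᵥ x' t + B *ᵥ x t + f) - (A *ᵥ h' t + B *ᵥ h t + f) := by
    rw [Pi.sub_apply, Pi.sub_apply, mulVec_sub, mulVec_sub]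
    abel
  rw [forcing_cancels]
  exact hx'.sub hh'

variable {H : 𝕜 → Matrix m ι R} {C : 𝕜 → Matrix ι ι R} {C' B : Matrix ι ι R} {u u' : 𝕜 → ι → R}

theorem hasDerivAt_mulVec_of_deriv_eq_neg_mul {v : ι → R}
    (hH : ∀ i j, HasDerivAt (fun s => H s i j) ((-(H t * C t)) i j) t) (hu : HasDerivAt u v t) :
    HasDerivAt (fun s => H s *ᵥ u s) (H t *ᵥ (v - C t *ᵥ u t)) t := by
  convert hasDerivAt_mulVec hH hu using 1
  rw [mulVec_sub, neg_mulVec, mulVec_mulVec, neg_add_eq_sub]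

theorem hasDerivAt_mulVec_sub_of_deriv_eq_neg_mul
    (hH : ∀ i j, HasDerivAt (fun s => H s i j) ((-(H t * C t)) i j) t)
    (hC : ∀ i j, HasDerivAt (fun s => C s i j) (C' i j) t)
    (hu : HasDerivAt u (u' t) t) (hu' : HasDerivAt u' ((2 • C t) *ᵥ u' t + B *ᵥ u t) t) :
    HasDerivAt (fun s => H s *ᵥ (u' s - C s *ᵥ u s)) (H t *ᵥ ((B - C' + C t * C t) *ᵥ u t)) t := by
  have first_order_terms_cancel :
      (B - C' + C t * C t) *ᵥ u t =
        (2 • C t) *ᵥ u' t + B *ᵥ u t - (C' *ᵥ u t + C t *ᵥ u' t)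
          - C t *ᵥ (u' t - C t *ᵥ u t) := by
    simp only [two_nsmul, add_mulVec, sub_mulVec, mulVec_sub, ← mulVec_mulVec]
    abel
  rw [first_order_terms_cancel]
  exact hasDerivAt_mulVec_of_deriv_eq_neg_mul hH (hu'.fun_sub (hasDerivAt_mulVec hC hu))

end MovingFrame

theorem conj_mulVec_mulVec_s5 {ι R : Type*} [Fintype ι] [DecidableEq ι] [CommRing R]
    {H : Matrix ι ι R} (hH : IsUnit H.det) (K : Matrix ι ι R) (v : ι → R) :
    (H * K * H⁻¹) *ᵥ (H *ᵥ v) = H *ᵥ (K *ᵥ v) := by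
  rw [mulVec_mulVec, nonsing_inv_mul_cancel_right _ _ hH, mulVec_mulVec]

theorem reduction_to_homogeneous_system_general {𝕜 R ι : Type*} [NontriviallyNormedField 𝕜]
    [NeZero (2 : 𝕜)] [NormedCommRing R] [NormedAlgebra 𝕜 R] [Fintype ι] [DecidableEq ι]
    {S : Set 𝕜} {A A' B H : 𝕜 → Matrix ι ι R} {f x x' h h' : 𝕜 → ι → R}
    (hA : ∀ t ∈ S, ∀ i j, HasDerivAt (fun s => A s i j) (A' t i j) t)
    (hHinv : ∀ t ∈ S, IsUnit (H t).det)
    (hH : ∀ t ∈ S, ∀ i j, HasDerivAt (fun s => H s i j) ((-(1 / 2 : 𝕜) • (H t * A t)) i j) t)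
    (hx : ∀ t ∈ S, HasDerivAt x (x' t) t)
    (hx' : ∀ t ∈ S, HasDerivAt x' (A t *ᵥ x' t + B t *ᵥ x t + f t) t)
    (hh : ∀ t ∈ S, HasDerivAt h (h' t) t)
    (hh' : ∀ t ∈ S, HasDerivAt h' (A t *ᵥ h' t + B t *ᵥ h t + f t) t) :
    ∃ y' : 𝕜 → ι → R,
      (∀ t ∈ S, HasDerivAt (fun s => H s *ᵥ (x s - h s)) (y' t) t) ∧
      ∀ t ∈ S, HasDerivAt y'
        ((H t * (B t - (1 / 2 : 𝕜) • A' t + (1 / 4 : 𝕜) • (A t * A t)) * (H t)⁻¹) *ᵥ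
          (H t *ᵥ (x t - h t))) t := by
  let C : 𝕜 → Matrix ι ι R := fun t => (1 / 2 : 𝕜) • A t
  have two_smul_C (t : 𝕜) : 2 • C t = A t := by
    rw [← Nat.cast_smul_eq_nsmul 𝕜, smul_smul, Nat.cast_ofNat, mul_one_div_cancel two_ne_zero,
      one_smul]
  have C_mul_C (t : 𝕜) : C t * C t = (1 / 4 : 𝕜) • (A t * A t) := by
    rw [smul_mul_smul_comm, one_div_mul_one_div, two_mul, two_add_two_eq_four]
  have hC (t) (ht : t ∈ S) (i j) : HasDerivAt (fun s => C s i j) (((1 / 2 : 𝕜) • A' t) i j) t :=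
    (hA t ht i j).const_smul (1 / 2 : 𝕜)
  have hHC (t) (ht : t ∈ S) (i j) : HasDerivAt (fun s => H s i j) ((-(H t * C t)) i j) t := by
    simpa only [C, Matrix.mul_smul, neg_smul] using hH t ht i j
  have hu (t) (ht : t ∈ S) : HasDerivAt (x - h) ((x' - h') t) t := (hx t ht).sub (hh t ht)
  have hu' (t) (ht : t ∈ S) :
      HasDerivAt (x' - h') ((2 • C t) *ᵥ (x' - h') t + B t *ᵥ (x - h) t) t := by
    rw [two_smul_C]
    exact hasDerivAt_sub_of_solutions (hx' t ht) (hh' t ht)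
  refine ⟨fun s => H s *ᵥ ((x' - h') s - C s *ᵥ (x - h) s),
    fun t ht => hasDerivAt_mulVec_of_deriv_eq_neg_mul (hHC t ht) (hu t ht), fun t ht => ?_⟩
  rw [conj_mulVec_mulVec_s5 (hHinv t ht), ← C_mul_C]
  exact hasDerivAt_mulVec_sub_of_deriv_eq_neg_mul (hHC t ht) (hC t ht) (hu t ht) (hu' t ht)

/-- Reduction of any normal linear system `x'' = A x' + B x + f` to a homogeneous system
`y'' = H (B − (1/2)A' + (1/4)A²) H⁻¹ y`, where `h` is a particular solution and `H` solves
`H' + (1/2) H A = 0`, via the equivalence transformation `y = H (x − h)`. -/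
theorem reduction_to_homogeneous_system (n : ℕ) (hn : 1 ≤ n)
    (A A' B : ℝ → Matrix (Fin n) (Fin n) ℝ) (f : ℝ → Fin n → ℝ)
    (hA : ∀ (t : ℝ) (i j : Fin n), HasDerivAt (fun s => A s i j) (A' t i j) t)
    (H : ℝ → Matrix (Fin n) (Fin n) ℝ)
    (hHinv : ∀ t, IsUnit (H t).det)
    (hH : ∀ (t : ℝ) (i j : Fin n),
      HasDerivAt (fun s => H s i j) ((-(1 / 2 : ℝ) • (H t * A t)) i j) t)
    (x x' x'' h h' h'' : ℝ → Fin n → ℝ)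
    (hx1 : ∀ t, HasDerivAt x (x' t) t) (hx2 : ∀ t, HasDerivAt x' (x'' t) t)
    (hxeq : ∀ t, x'' t = (A t).mulVec (x' t) + (B t).mulVec (x t) + f t)
    (hh1 : ∀ t, HasDerivAt h (h' t) t) (hh2 : ∀ t, HasDerivAt h' (h'' t) t)
    (hheq : ∀ t, h'' t = (A t).mulVec (h' t) + (B t).mulVec (h t) + f t) :
    ∃ y' y'' : ℝ → Fin n → ℝ,
      (∀ t, HasDerivAt (fun s => (H s).mulVec (x s - h s)) (y' t) t) ∧
      (∀ t, HasDerivAt y' (y'' t) t) ∧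
      ∀ t, y'' t =
        (H t * (B t - (1 / 2 : ℝ) • A' t + (1 / 4 : ℝ) • (A t * A t)) * (H t)⁻¹).mulVec
          ((H t).mulVec (x t - h t)) := by
  obtain ⟨y', hy, hy'⟩ := reduction_to_homogeneous_system_general (S := Set.univ)
    (fun t _ => hA t) (fun t _ => hHinv t) (fun t _ => hH t) (fun t _ => hx1 t)
    (fun t _ => hxeq t ▸ hx2 t) (fun t _ => hh1 t) (fun t _ => hheq t ▸ hh2 t)
  exact ⟨y', _, fun t => hy t trivial, fun t => hy' t trivial, fun _ => rfl⟩
end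

section
/- Let n ≥ 1, let Υ, V₀ ∈ M_n(ℝ), set K₀ := V₀ and K_{l+1} := [Υ, K_l] for l ∈ ℕ, and let Γ ∈ M_n(ℝ) satisfy [Γ, K_l] = 0 for all l ∈ ℕ. Let α ∈ ℝ, α ≠ 0, and let M ∈ M_n(ℝ) be invertible. Define Υ̃ := α·M(Υ + Γ)M^{-1} and Ṽ₀ := α²·M·V₀·M^{-1}. Then for all t ∈ ℝ: exp(tΥ̃)·Ṽ₀·exp(−tΥ̃) = α²·M·(exp(αtΥ)·V₀·exp(−αtΥ))·M^{-1}. Consequently, if x : ℝ → ℝⁿ is twice differentiable with x''(t) = exp(tΥ)·V₀·exp(−tΥ)·x(t) for all t, then y(t) := M·x(αt) satisfies y''(t) = exp(tΥ̃)·Ṽ₀·exp(−tΥ̃)·y(t) for all t. (This is the 'if' direction of the paper's similarity criterion for properly t-shift-invariant systems x_tt = e^{tΥ}V(0)e^{−tΥ}x.) -/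
open NormedSpace

/-!
Conjugation by `exp a` is the exponential of `ad a`, so `exp a * x * exp (-a)` depends only on the
iterated commutators `(ad a)^l x`. Adding to `a` an element that commutes with all of them leaves
them, and hence the conjugate, unchanged. The factors `M` and `α` are then absorbed by
`exp (M a M⁻¹) = M exp(a) M⁻¹` and by the chain rule for `t ↦ M x(αt)`.
-/

section Operators

variable {𝕂 E F : Type*} [NontriviallyNormedField 𝕂] [NormedAddCommGroup E] [NormedSpace 𝕂 E]
  [NormedAddCommGroup F] [NormedSpace 𝕂 F]

theorem hasSum_exp_apply [CharZero 𝕂] [ContinuousSMul ℚ 𝕂] [CompleteSpace E]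
    (T : E →L[𝕂] E) (x : E) :
    HasSum (fun k : ℕ => (k.factorial⁻¹ : 𝕂) • (T ^ k) x) (exp T x) :=
  (exp_series_hasSum_exp' (𝕂 := 𝕂) T).mapL (ContinuousLinearMap.apply 𝕂 E x)

theorem exp_lsmul {𝔸 : Type*} [NormedRing 𝔸] [NormedAlgebra ℚ 𝔸] [CompleteSpace 𝔸] [CharZero 𝕂]
    [NormedAlgebra 𝕂 𝔸] [Module 𝔸 E] [IsBoundedSMul 𝔸 E] [IsScalarTower 𝕂 𝔸 E] (a : 𝔸) :
    exp (ContinuousLinearMap.lsmul 𝕂 𝔸 a : E →L[𝕂] E) =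
      ContinuousLinearMap.lsmul 𝕂 𝔸 (exp a) := by
  let : Algebra ℚ (E →L[𝕂] E) := Algebra.compHom _ (algebraMap ℚ 𝕂)
  let lsmulHom : 𝔸 →+* (E →L[𝕂] E) :=
    { toFun := ContinuousLinearMap.lsmul 𝕂 𝔸
      map_one' := by ext; simp
      map_mul' := fun a b => by ext; simp [mul_smul]
      map_zero' := map_zero _
      map_add' := map_add _ }
  exact (map_exp lsmulHom (ContinuousLinearMap.lsmul 𝕂 𝔸).continuous a).symm

theorem hasDerivAt_clm_comp_mul_left (L : E →L[𝕂] F) {f : 𝕂 → E} {f' : E} {α t : 𝕂}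
    (hf : HasDerivAt f f' (α * t)) :
    HasDerivAt (fun s => L (f (α * s))) (α • L f') t := by
  rw [← map_smul]
  exact L.hasFDerivAt.comp_hasDerivAt t (hf.scomp t (hasDerivAt_const_mul α))

end Operators

section Conjugation

variable {𝔸 : Type*} [NormedRing 𝔸] [NormedAlgebra ℚ 𝔸]

/-- The adjoint action `ad a : x ↦ a * x - x * a` of a normed algebra on itself, as a bounded
operator whose exponential is conjugation by `exp a`. Its scalars are rational so that the
algebra need not be normed over a larger field. -/
noncomputable def adCLM (a : 𝔸) : 𝔸 →L[ℚ] 𝔸 :=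
  ContinuousLinearMap.mul ℚ 𝔸 a - (ContinuousLinearMap.mul ℚ 𝔸).flip a

theorem adCLM_pow_apply {a : 𝔸} {K : ℕ → 𝔸} (hK : ∀ l, K (l + 1) = a * K l - K l * a) (l : ℕ) :
    (adCLM a ^ l) (K 0) = K l := by
  induction l with
  | zero => rfl
  | succ l ih =>
    rw [pow_succ', mul_apply_eq_comp, ih, hK]
    rfl

variable [CompleteSpace 𝔸]

theorem exp_adCLM_apply (a x : 𝔸) : exp (adCLM a) x = exp a * x * exp (-a) := by
  -- Right multiplication is the action of `𝔸ᵐᵒᵖ`, so `exp_lsmul` covers both summands of `ad a`.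
  have hcomm : Commute (ContinuousLinearMap.lsmul ℚ 𝔸 a : 𝔸 →L[ℚ] 𝔸)
      (ContinuousLinearMap.lsmul ℚ 𝔸ᵐᵒᵖ (MulOpposite.op (-a))) := by
    ext y
    exact smul_comm a (MulOpposite.op (-a)) y
  have hadd : adCLM a = ContinuousLinearMap.lsmul ℚ 𝔸 a +
      ContinuousLinearMap.lsmul ℚ 𝔸ᵐᵒᵖ (MulOpposite.op (-a)) := by
    rw [MulOpposite.op_neg, map_neg, ← sub_eq_add_neg]
    rfl
  rw [hadd, exp_add_of_commute hcomm, exp_lsmul, exp_lsmul, exp_op, mul_assoc]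
  rfl

theorem hasSum_exp_mul_mul_exp_neg {a : 𝔸} {K : ℕ → 𝔸}
    (hK : ∀ l, K (l + 1) = a * K l - K l * a) :
    HasSum (fun l : ℕ => (l.factorial⁻¹ : ℚ) • K l) (exp a * K 0 * exp (-a)) := by
  simpa only [adCLM_pow_apply hK, exp_adCLM_apply] using hasSum_exp_apply (adCLM a) (K 0)

theorem exp_add_mul_mul_exp_neg_of_commute {a b : 𝔸} {K : ℕ → 𝔸}
    (hK : ∀ l, K (l + 1) = a * K l - K l * a) (hb : ∀ l, Commute b (K l)) :
    exp (a + b) * K 0 * exp (-(a + b)) = exp a * K 0 * exp (-a) := by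
  have hK_add (l : ℕ) : K (l + 1) = (a + b) * K l - K l * (a + b) := by
    rw [hK, add_mul, mul_add, (hb l).eq, add_sub_add_right_eq_sub]
  exact (hasSum_exp_mul_mul_exp_neg hK_add).unique (hasSum_exp_mul_mul_exp_neg hK)

theorem exp_smul_add_mul_mul_exp_neg_of_commute {𝕂 : Type*} [CommSemiring 𝕂] [Algebra 𝕂 𝔸]
    {a b : 𝔸} {K : ℕ → 𝔸} (hK : ∀ l, K (l + 1) = a * K l - K l * a)
    (hb : ∀ l, Commute b (K l)) (s : 𝕂) :
    exp (s • (a + b)) * K 0 * exp (-(s • (a + b))) = exp (s • a) * K 0 * exp (-(s • a)) := by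
  have hK_smul (l : ℕ) :
      s ^ (l + 1) • K (l + 1) = s • a * s ^ l • K l - s ^ l • K l * s • a := by
    rw [hK, smul_mul_smul_comm, smul_mul_smul_comm, ← pow_succ, ← pow_succ', smul_sub]
  simpa only [smul_add, pow_zero, one_smul] using
    exp_add_mul_mul_exp_neg_of_commute (K := fun l => s ^ l • K l) hK_smul
      fun l => ((hb l).smul_left s).smul_right (s ^ l)

theorem exp_units_conj_mul_units_conj_mul_exp_neg (u : 𝔸ˣ) (a x : 𝔸) :
    exp (u * a * ↑u⁻¹) * (u * x * ↑u⁻¹) * exp (-(u * a * ↑u⁻¹)) =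
      u * (exp a * x * exp (-a)) * ↑u⁻¹ := by
  rw [← neg_mul, ← mul_neg, exp_units_conj, exp_units_conj]
  simp only [mul_assoc, Units.inv_mul_cancel_left]

theorem exp_smul_units_conj_add_mul_mul_exp_neg_of_commute {𝕂 : Type*} [CommSemiring 𝕂]
    [Algebra 𝕂 𝔸] {Υ Γ : 𝔸} {K : ℕ → 𝔸} (hK : ∀ l, K (l + 1) = Υ * K l - K l * Υ)
    (hΓ : ∀ l, Commute Γ (K l)) (α : 𝕂) (M : 𝔸ˣ) (t : 𝕂) :
    exp (t • (α • (M * (Υ + Γ) * ↑M⁻¹))) * (α ^ 2 • (M * K 0 * ↑M⁻¹)) *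
        exp (-(t • (α • (M * (Υ + Γ) * ↑M⁻¹)))) =
      α ^ 2 • (M * (exp ((α * t) • Υ) * K 0 * exp (-((α * t) • Υ))) * ↑M⁻¹) := by
  have hconj : t • (α • (M * (Υ + Γ) * ↑M⁻¹)) = M * ((α * t) • (Υ + Γ)) * ↑M⁻¹ := by
    rw [smul_smul, mul_comm t α, mul_smul_comm, smul_mul_assoc]
  rw [hconj, mul_smul_comm, smul_mul_assoc, exp_units_conj_mul_units_conj_mul_exp_neg,
    exp_smul_add_mul_mul_exp_neg_of_commute hK hΓ]

end Conjugation

theorem similarity_criterion_if_direction_general {𝕂 𝔸 E : Type*} [NontriviallyNormedField 𝕂]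
    [NormedRing 𝔸] [NormedAlgebra ℚ 𝔸] [Algebra 𝕂 𝔸] [CompleteSpace 𝔸]
    [NormedAddCommGroup E] [NormedSpace 𝕂 E] (ρ : 𝔸 →ₐ[𝕂] (E →L[𝕂] E))
    (Υ V₀ Γ : 𝔸) (K : ℕ → 𝔸) (hK0 : K 0 = V₀) (hKrec : ∀ l, K (l + 1) = Υ * K l - K l * Υ)
    (hΓ : ∀ l, Γ * K l - K l * Γ = 0) (α : 𝕂) (M : 𝔸ˣ) :
    (∀ t : 𝕂,
      exp (t • (α • (M * (Υ + Γ) * ↑M⁻¹))) * (α ^ 2 • (M * V₀ * ↑M⁻¹)) *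
          exp (-(t • (α • (M * (Υ + Γ) * ↑M⁻¹)))) =
        α ^ 2 • (M * (exp ((α * t) • Υ) * V₀ * exp (-((α * t) • Υ))) * ↑M⁻¹)) ∧
    ∀ x x' x'' : 𝕂 → E,
      (∀ t, HasDerivAt x (x' t) t) → (∀ t, HasDerivAt x' (x'' t) t) →
      (∀ t, x'' t = ρ (exp (t • Υ) * V₀ * exp (-(t • Υ))) (x t)) →
      ∃ y' y'' : 𝕂 → E,
        (∀ t, HasDerivAt (fun s => ρ M (x (α * s))) (y' t) t) ∧
        (∀ t, HasDerivAt y' (y'' t) t) ∧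
        ∀ t, y'' t =
          ρ (exp (t • (α • (M * (Υ + Γ) * ↑M⁻¹))) * (α ^ 2 • (M * V₀ * ↑M⁻¹)) *
            exp (-(t • (α • (M * (Υ + Γ) * ↑M⁻¹))))) (ρ M (x (α * t))) := by
  subst hK0
  have hsimilar := exp_smul_units_conj_add_mul_mul_exp_neg_of_commute hKrec
    (fun l => sub_eq_zero.mp (hΓ l)) α M
  refine ⟨hsimilar, fun x x' x'' hx hx' hode => ?_⟩
  refine ⟨fun t => α • ρ M (x' (α * t)), fun t => α • α • ρ M (x'' (α * t)),
    fun t => hasDerivAt_clm_comp_mul_left (ρ M) (hx (α * t)),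
    fun t => (hasDerivAt_clm_comp_mul_left (ρ M) (hx' (α * t))).const_smul α, fun t => ?_⟩
  calc α • α • ρ M (x'' (α * t))
      = α ^ 2 • ρ (M * (exp ((α * t) • Υ) * K 0 * exp (-((α * t) • Υ)))) (x (α * t)) := by
        rw [smul_smul, ← sq, hode, ← mul_apply_eq_comp, ← map_mul]
    _ = ρ (α ^ 2 • (M * (exp ((α * t) • Υ) * K 0 * exp (-((α * t) • Υ))) * ↑M⁻¹))
          (ρ M (x (α * t))) := by
        rw [← mul_apply_eq_comp, ← map_mul, smul_mul_assoc, Units.inv_mul_cancel_right, map_smul,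
          smul_apply]
    _ = _ := by rw [hsimilar]

/-- The 'if' direction of the similarity criterion for properly `t`-shift-invariant systems
`x_tt = e^{tΥ} V₀ e^{−tΥ} x`: if `Γ` centralizes all the matrices `K_l` (where `K₀ = V₀`,
`K_{l+1} = [Υ, K_l]`), `α ≠ 0` and `M` is invertible, then with `Υ̃ = αM(Υ + Γ)M⁻¹` and
`Ṽ₀ = α²MV₀M⁻¹` one has `e^{tΥ̃} Ṽ₀ e^{−tΥ̃} = α² M e^{αtΥ} V₀ e^{−αtΥ} M⁻¹`, and the
transformation `y(t) = M x(αt)` maps solutions of the first system to solutions of the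
second one. -/
theorem similarity_criterion_if_direction (n : ℕ) (hn : 1 ≤ n)
    (Υ V₀ Γ : Matrix (Fin n) (Fin n) ℝ)
    (K : ℕ → Matrix (Fin n) (Fin n) ℝ)
    (hK0 : K 0 = V₀) (hKrec : ∀ l, K (l + 1) = Υ * K l - K l * Υ)
    (hΓ : ∀ l, Γ * K l - K l * Γ = 0)
    (α : ℝ) (hα : α ≠ 0)
    (M : Matrix (Fin n) (Fin n) ℝ) (hM : IsUnit M.det) :
    (∀ t : ℝ,
      exp (t • (α • (M * (Υ + Γ) * M⁻¹))) * (α ^ 2 • (M * V₀ * M⁻¹)) *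
          exp (-(t • (α • (M * (Υ + Γ) * M⁻¹)))) =
        α ^ 2 • (M * (exp ((α * t) • Υ) * V₀ * exp (-((α * t) • Υ))) * M⁻¹)) ∧
    ∀ x x' x'' : ℝ → Fin n → ℝ,
      (∀ t, HasDerivAt x (x' t) t) → (∀ t, HasDerivAt x' (x'' t) t) →
      (∀ t, x'' t = (exp (t • Υ) * V₀ * exp (-(t • Υ))).mulVec (x t)) →
      ∃ y' y'' : ℝ → Fin n → ℝ,
        (∀ t, HasDerivAt (fun s => M.mulVec (x (α * s))) (y' t) t) ∧
        (∀ t, HasDerivAt y' (y'' t) t) ∧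
        ∀ t, y'' t =
          (exp (t • (α • (M * (Υ + Γ) * M⁻¹))) * (α ^ 2 • (M * V₀ * M⁻¹)) *
            exp (-(t • (α • (M * (Υ + Γ) * M⁻¹))))).mulVec (M.mulVec (x (α * t))) := by
  -- `exp` sees only the topology, so any Banach algebra norm on matrices will do.
  open scoped Matrix.Norms.Operator in
  exact similarity_criterion_if_direction_general
    (Matrix.toLinAlgEquiv'.trans (Module.End.toContinuousLinearMap (Fin n → ℝ))).toAlgHom
    Υ V₀ Γ K hK0 hKrec hΓ α (Matrix.nonsingInvUnit M hM)
end

section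
/- Let F be a field of characteristic zero, n ≥ 1, and let Λ, Υ, W ∈ M_n(F). Set K₀ := W and K_{l+1} := [Υ, K_l] for l ∈ ℕ, and suppose [Λ, K_l] = (l+2)·K_l for every l ∈ ℕ. Then every matrix K_l (l ∈ ℕ) is nilpotent. -/
/-!
The operator `ad x` is a derivation, so its eigenvalues add under multiplication. If
`[x, a] = c • a`, the powers `a ^ k` therefore satisfy `[x, a ^ k] = (k * c) • a ^ k`. For `c ≠ 0`
in characteristic zero these eigenvalues are pairwise distinct, so if no power of `a` vanished the
powers would form an infinite linearly independent family in a finite module.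
-/

open Module.End LieAlgebra

attribute [local instance] LieRing.ofAssociativeRing

section Eigenspace

variable {R A : Type*} [CommRing R] [Ring A] [Algebra R A] {x a b : A} {μ ν : R}

theorem mul_mem_eigenspace_ad (ha : a ∈ eigenspace (ad R A x) μ)
    (hb : b ∈ eigenspace (ad R A x) ν) : a * b ∈ eigenspace (ad R A x) (μ + ν) := by
  rw [mem_eigenspace_iff, ad_apply] at ha hb ⊢
  calc ⁅x, a * b⁆ = ⁅x, a⁆ * b + a * ⁅x, b⁆ := by simp only [Ring.lie_def]; noncomm_ring
    _ = (μ + ν) • (a * b) := by rw [ha, hb, smul_mul_assoc, mul_smul_comm, add_smul]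

theorem pow_mem_eigenspace_ad (ha : a ∈ eigenspace (ad R A x) μ) (k : ℕ) :
    a ^ k ∈ eigenspace (ad R A x) (k * μ) := by
  induction k with
  | zero => simp [Ring.lie_def]
  | succ k ih => simpa only [pow_succ, Nat.cast_succ, add_one_mul] using mul_mem_eigenspace_ad ih ha

end Eigenspace

theorem nilpotent_of_graded_commutation_general {R A : Type*} [CommRing R] [IsDomain R]
    [CharZero R] [Ring A] [Algebra R A] [Module.IsTorsionFree R A] [Module.Finite R A]
    {x a : A} {c : R} (hc : c ≠ 0) (h : ⁅x, a⁆ = c • a) : IsNilpotent a := by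
  by_contra not_nilpotent
  have powers_ne_zero (k : ℕ) : a ^ k ≠ 0 := fun hk => not_nilpotent ⟨k, hk⟩
  have eigenvalues_injective : Function.Injective fun k : ℕ => (k : R) * c :=
    (mul_left_injective₀ hc).comp Nat.cast_injective
  have powers_independent : LinearIndependent R fun k : ℕ => a ^ k :=
    eigenvectors_linearIndependent' (ad R A x) _ eigenvalues_injective _
      fun k => ⟨pow_mem_eigenspace_ad (mem_eigenspace_iff.mpr h) k, powers_ne_zero k⟩
  have : Finite ℕ := powers_independent.finite
  exact not_finite ℕ

/-- If `[Λ, K_l] = (l+2)·K_l` for the sequence `K₀ = W`, `K_{l+1} = [Υ, K_l]`, then every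
matrix `K_l` is nilpotent. -/
theorem nilpotent_of_graded_commutation (F : Type*) [Field F] [CharZero F]
    (n : ℕ) (hn : 1 ≤ n)
    (Λ Υ W : Matrix (Fin n) (Fin n) F)
    (K : ℕ → Matrix (Fin n) (Fin n) F)
    (hK0 : K 0 = W) (hKrec : ∀ l, K (l + 1) = Υ * K l - K l * Υ)
    (hΛ : ∀ l : ℕ, Λ * K l - K l * Λ = ((l : F) + 2) • K l) :
    ∀ l : ℕ, IsNilpotent (K l) := by
  intro l
  exact nilpotent_of_graded_commutation_general (by exact_mod_cast (l + 1).succ_ne_zero) (hΛ l)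
end

section
/- Let F be a field, n ≥ 1, and let Λ, S, N, K ∈ M_n(F) and c ∈ F. Suppose Λ = S + N, where S·N = N·S, N is nilpotent, and S is diagonalizable over F (i.e. S = P·D·P^{-1} for some invertible P and diagonal D). If [Λ, K] = c·K, then [N, K] = 0 and [S, K] = c·K. (In the paper: any eigenvector K_l of ad_Λ commutes with the nilpotent part Λ_n of the Jordan–Chevalley decomposition of Λ, so Λ may be replaced by its semisimple part Λ_s.) -/
/-!
If `S` is diagonalizable, then `ad S` is semisimple: for diagonal `S` the matrix units are
eigenvectors of `ad S`, and conjugation is a Lie algebra automorphism. If `N` is nilpotent and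
commutes with `S`, then `ad N` is nilpotent and commutes with `ad S`. Hence an eigenvector of
`ad (S + N) = ad S + ad N` is a generalized eigenvector of the semisimple operator `ad S` for the
same eigenvalue, so it is an eigenvector of `ad S` and is killed by `ad N`.
-/

section Semisimple

open Module Module.End
open scoped Polynomial

theorem apply_eq_zero_and_apply_eq_smul_of_add_apply_eq_smul
    {R M : Type*} [CommRing R] [AddCommGroup M] [Module R M] {s n : End R M} {μ : R} {x : M}
    (hs : s.IsFinitelySemisimple) (hn : IsNilpotent n) (hsn : Commute s n)
    (hx : (s + n) x = μ • x) : n x = 0 ∧ s x = μ • x := by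
  have hsx : s x = μ • x :=
    apply_eq_of_mem_of_comm_of_isFinitelySemisimple_of_isNil (mem_eigenspace_iff.mpr hx)
      ((Commute.refl s).add_left hsn.symm) hs (by simpa using hn)
  exact ⟨by simpa [hsx] using hx, hsx⟩

variable {K V : Type*} [Field K] [AddCommGroup V] [Module K V] {f : End K V}

theorem isSemisimple_restrict_eigenspace (f : End K V) (μ : K) :
    IsSemisimple (f.restrict (eigenspace_mem_invtSubmodule f μ)) := by
  rw [restrict_eigenspace]
  exact IsSemisimple_smul μ isSemisimple_id

theorem isSemisimple_of_iSup_eigenspace_eq_top (hf : ⨆ μ, f.eigenspace μ = ⊤) :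
    f.IsSemisimple := by
  let p (μ : K) : Submodule K[X] (AEval' f) :=
    AEval.mapSubmodule K V f ⟨f.eigenspace μ, eigenspace_mem_invtSubmodule f μ⟩
  have isSemisimpleModule_p (μ : K) : IsSemisimpleModule K[X] (p μ) :=
    (LinearEquiv.isSemisimpleModule_iff (AEval.restrict_equiv_mapSubmodule f _ _)).mp
      (isSemisimple_restrict_eigenspace f μ)
  have iSup_p : ⨆ μ, p μ = ⊤ := by
    have eigenspace_le (μ : K) :
        f.eigenspace μ ≤ ((AEval.mapSubmodule K V f).symm (⨆ μ, p μ)).1 :=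
      Subtype.coe_le_coe.mpr ((OrderIso.le_symm_apply _).mpr (le_iSup p μ))
    rw [← map_eq_top_iff (AEval.mapSubmodule K V f).symm]
    exact Subtype.ext (top_le_iff.mp (hf ▸ iSup_le eigenspace_le))
  exact isSemisimpleModule_of_isSemisimpleModule_submodule' isSemisimpleModule_p iSup_p

theorem isSemisimple_of_basis_apply_eq_smul {ι : Type*} (b : Basis ι K V) (μ : ι → K)
    (hb : ∀ i, f (b i) = μ i • b i) : f.IsSemisimple := by
  refine isSemisimple_of_iSup_eigenspace_eq_top ?_
  rw [eq_top_iff, ← b.span_eq, Submodule.span_le]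
  rintro _ ⟨i, rfl⟩
  exact Submodule.mem_iSup_of_mem (μ i) (mem_eigenspace_iff.mpr (hb i))

end Semisimple

section Adjoint

open LieAlgebra

attribute [local instance] LieRing.ofAssociativeRing

theorem isSemisimple_ad_lieEquiv_apply_iff {R L L' : Type*} [CommRing R] [LieRing L]
    [LieAlgebra R L] [LieRing L'] [LieAlgebra R L'] (e : L ≃ₗ⁅R⁆ L') (x : L) :
    (ad R L' (e x)).IsSemisimple ↔ (ad R L x).IsSemisimple :=
  (LinearEquiv.isSemisimple_iff _ _ e.toLinearEquiv (LinearMap.ext fun y ↦ e.map_lie x y)).symm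

section Matrix

variable {n : Type*} [Fintype n] [DecidableEq n]

theorem diagonal_lie_apply {R : Type*} [CommRing R] (d : n → R) (X : Matrix n n R) (i j : n) :
    ⁅Matrix.diagonal d, X⁆ i j = (d i - d j) * X i j := by
  simp only [Ring.lie_def, Matrix.sub_apply, Matrix.diagonal_mul, Matrix.mul_diagonal]
  ring

theorem diagonal_lie_single {R : Type*} [CommRing R] (d : n → R) (i j : n) (r : R) :
    ⁅Matrix.diagonal d, Matrix.single i j r⁆ = (d i - d j) • Matrix.single i j r := by
  ext k l
  rw [diagonal_lie_apply, Matrix.smul_apply, smul_eq_mul, Matrix.single_apply]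
  split_ifs with hkl
  · rw [hkl.1, hkl.2]
  · simp only [mul_zero]

variable {F : Type*} [Field F]

theorem isSemisimple_ad_diagonal (d : n → F) :
    (ad F (Matrix n n F) (Matrix.diagonal d)).IsSemisimple :=
  isSemisimple_of_basis_apply_eq_smul (Matrix.stdBasis F n n) (fun ij ↦ d ij.1 - d ij.2)
    fun (i, j) ↦ by rw [Matrix.stdBasis_eq_single, ad_apply, diagonal_lie_single]

theorem isSemisimple_ad_conj_of_isDiag {P D : Matrix n n F} (hP : IsUnit P.det) (hD : D.IsDiag) :
    (ad F (Matrix n n F) (P * D * P⁻¹)).IsSemisimple := by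
  rw [← Matrix.lieConj_apply P D (P.invertibleOfIsUnitDet hP), isSemisimple_ad_lieEquiv_apply_iff,
    ← hD.diagonal_diag]
  exact isSemisimple_ad_diagonal D.diag

end Matrix

theorem ad_eigenvector_commutes_with_nilpotent_part_general {R A : Type*} [CommRing R] [Ring A]
    [Algebra R A] {S N K : A} {c : R} (hS : (ad R A S).IsFinitelySemisimple)
    (hN : IsNilpotent N) (hSN : Commute S N) (hK : ⁅S + N, K⁆ = c • K) :
    ⁅N, K⁆ = 0 ∧ ⁅S, K⁆ = c • K :=
  apply_eq_zero_and_apply_eq_smul_of_add_apply_eq_smul hS (ad_nilpotent_of_nilpotent hN)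
    (commute_ad_of_commute hSN) (by rwa [← map_add])

end Adjoint

/-- Any eigenvector `K` of `ad_Λ` commutes with the nilpotent part `N` of the
Jordan–Chevalley decomposition `Λ = S + N` (with `S` diagonalizable, `N` nilpotent,
`SN = NS`), and is an eigenvector of `ad_S` with the same eigenvalue. -/
theorem ad_eigenvector_commutes_with_nilpotent_part (F : Type*) [Field F]
    (n : ℕ) (hn : 1 ≤ n)
    (Λ S N K : Matrix (Fin n) (Fin n) F) (c : F)
    (hΛ : Λ = S + N) (hcomm : S * N = N * S) (hN : IsNilpotent N)
    (hS : ∃ P D : Matrix (Fin n) (Fin n) F, IsUnit P.det ∧ D.IsDiag ∧ S = P * D * P⁻¹)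
    (hK : Λ * K - K * Λ = c • K) :
    N * K - K * N = 0 ∧ S * K - K * S = c • K := by
  obtain ⟨P, D, hP, hD, rfl⟩ := hS
  subst hΛ
  exact ad_eigenvector_commutes_with_nilpotent_part_general
    (isSemisimple_ad_conj_of_isDiag hP hD).isFinitelySemisimple hN hcomm hK
end

section
/- Let n ≥ 1 and let Λ, Υ, W ∈ M_n(ℂ) with Λ diagonalizable over ℂ. Set K₀ := W and K_{l+1} := [Υ, K_l] for l ∈ ℕ, and suppose [Λ, K_l] = (l+2)·K_l for every l ∈ ℕ. Then there exist matrices Υ̂, Υ̌ ∈ M_n(ℂ) such that Υ = Υ̂ + Υ̌, [Λ, Υ̂] = Υ̂, and [Υ̌, K_l] = 0 for all l ∈ ℕ. (In the paper: the matrix Υ may be replaced by its 'hat-part' with respect to Λ, so that the stronger commutation relation [Λ, Υ] = Υ holds.) -/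
/-! Split `Υ` into `ad Λ`-eigenvectors and let `Υ̂` be the component of eigenvalue `1`, `Υ̌` the sum
of the others. Bracketing with an eigenvector `K_l` of eigenvalue `l + 2` shifts eigenvalues by
`l + 2`, so `[Υ̌, K_l]` is a sum of eigenvectors with eigenvalues other than `l + 3`. But
`[Υ̌, K_l] = K_{l+1} - [Υ̂, K_l]` has eigenvalue `l + 3`, so it vanishes by independence of
eigenspaces. -/

open LieAlgebra LieModule Module.End

attribute [local instance] LieRing.ofAssociativeRing

section LieAlgebra

variable {R L L' M : Type*} [CommRing R] [LieRing L] [LieAlgebra R L] [LieRing L'] [LieAlgebra R L']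
  [AddCommGroup M] [Module R M] [LieRingModule L M] [LieModule R L M]

variable (R) in
/-- An element of a Lie algebra is ad-diagonalizable if the eigenspaces of its adjoint action span
the Lie algebra. The Lie algebra may be of infinite rank and no eigenbasis is chosen. -/
def IsAdDiagonalizable (x : L) : Prop :=
  ⨆ μ : R, (ad R L x).eigenspace μ = ⊤

theorem IsAdDiagonalizable.map_lieEquiv {x : L} (hx : IsAdDiagonalizable R x) (e : L ≃ₗ⁅R⁆ L') :
    IsAdDiagonalizable R (e x) := by
  have eigenspace_le (μ : R) : (ad R L x).eigenspace μ ≤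
      ((ad R L' (e x)).eigenspace μ).comap (e : L →ₗ[R] L') := by
    intro y hy
    rw [mem_eigenspace_iff, ad_apply] at hy
    rw [Submodule.mem_comap, mem_eigenspace_iff, ad_apply]
    change ⁅e x, e y⁆ = μ • e y
    rw [← LieEquiv.map_lie, hy, map_smul]
  have comap_eq_top : (⨆ μ : R, (ad R L' (e x)).eigenspace μ).comap (e : L →ₗ[R] L') = ⊤ := by
    rw [eq_top_iff, ← hx, iSup_le_iff]
    exact fun μ ↦ (eigenspace_le μ).trans (Submodule.comap_mono (le_iSup _ μ))
  refine eq_top_iff.mpr fun z _ ↦ ?_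
  obtain ⟨y, rfl⟩ := e.surjective z
  exact comap_eq_top.ge (Submodule.mem_top (x := y))

theorem lie_mem_eigenspace_toEnd {x y : L} {m : M} {a c : R}
    (hy : y ∈ (ad R L x).eigenspace a) (hm : m ∈ (toEnd R L M x).eigenspace c) :
    ⁅y, m⁆ ∈ (toEnd R L M x).eigenspace (a + c) := by
  rw [mem_eigenspace_iff, ad_apply] at hy
  rw [mem_eigenspace_iff, toEnd_apply_apply] at hm ⊢
  rw [leibniz_lie, hy, hm, smul_lie, lie_smul, add_smul]

theorem lie_mem_iSup_eigenspace_toEnd_ne {x y : L} {m : M} {a c : R}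
    (hy : y ∈ ⨆ (μ : R) (_ : μ ≠ a), (ad R L x).eigenspace μ)
    (hm : m ∈ (toEnd R L M x).eigenspace c) :
    ⁅y, m⁆ ∈ ⨆ (ν : R) (_ : ν ≠ a + c), (toEnd R L M x).eigenspace ν := by
  suffices ⨆ (μ : R) (_ : μ ≠ a), (ad R L x).eigenspace μ ≤
      (⨆ (ν : R) (_ : ν ≠ a + c), (toEnd R L M x).eigenspace ν).comap
        ((toEnd R L M : L →ₗ[R] Module.End R M).flip m) from this hy
  refine iSup₂_le fun μ hμ u hu ↦ ?_
  exact Submodule.mem_iSup_of_mem (μ + c) <|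
    Submodule.mem_iSup_of_mem (by simpa using hμ) (lie_mem_eigenspace_toEnd hu hm)

theorem lie_eq_zero_of_mem_iSup_eigenspace_ne [IsDomain R] [Module.IsTorsionFree R M]
    {x y : L} {m : M} {a c : R}
    (hy : y ∈ ⨆ (μ : R) (_ : μ ≠ a), (ad R L x).eigenspace μ)
    (hm : m ∈ (toEnd R L M x).eigenspace c)
    (hym : ⁅y, m⁆ ∈ (toEnd R L M x).eigenspace (a + c)) :
    ⁅y, m⁆ = 0 :=
  Submodule.disjoint_def.mp (eigenspaces_iSupIndep (toEnd R L M x) (a + c)) _ hym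
    (lie_mem_iSup_eigenspace_toEnd_ne hy hm)

theorem hat_check_decomposition_general [IsDomain R] [Module.IsTorsionFree R M] {x : L}
    (hx : IsAdDiagonalizable R x) (y : L) (a : R) :
    ∃ yhat ycheck : L, y = yhat + ycheck ∧ ⁅x, yhat⁆ = a • yhat ∧
      ∀ (c : R) (m : M), ⁅x, m⁆ = c • m → ⁅x, ⁅y, m⁆⁆ = (a + c) • ⁅y, m⁆ → ⁅ycheck, m⁆ = 0 := by
  have hy : y ∈ (ad R L x).eigenspace a ⊔ ⨆ (μ : R) (_ : μ ≠ a), (ad R L x).eigenspace μ := by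
    rw [← iSup_split_single, hx]
    exact Submodule.mem_top
  obtain ⟨yhat, hyhat, ycheck, hycheck, rfl⟩ := Submodule.mem_sup.mp hy
  refine ⟨yhat, ycheck, rfl, mem_eigenspace_iff.mp hyhat, fun c m hxm hxym ↦ ?_⟩
  have hm : m ∈ (toEnd R L M x).eigenspace c := mem_eigenspace_iff.mpr hxm
  have hym : ⁅yhat + ycheck, m⁆ ∈ (toEnd R L M x).eigenspace (a + c) :=
    mem_eigenspace_iff.mpr hxym
  refine lie_eq_zero_of_mem_iSup_eigenspace_ne hycheck hm ?_
  rw [← add_sub_cancel_left yhat ycheck, sub_lie]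
  exact sub_mem hym (lie_mem_eigenspace_toEnd hyhat hm)

end LieAlgebra

section Matrix

variable {R n : Type*} [CommRing R] [Fintype n] [DecidableEq n]

theorem lie_diagonal_single (d : n → R) (i j : n) (r : R) :
    ⁅Matrix.diagonal d, Matrix.single i j r⁆ = (d i - d j) • Matrix.single i j r := by
  ext k l
  rw [Ring.lie_def, Matrix.sub_apply, Matrix.diagonal_mul, Matrix.mul_diagonal, Matrix.smul_apply,
    Matrix.single_apply, smul_eq_mul]
  split_ifs with h
  · rw [h.1, h.2]
    ring
  · simp

theorem isAdDiagonalizable_diagonal (d : n → R) : IsAdDiagonalizable R (Matrix.diagonal d) := by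
  refine eq_top_iff.mpr fun A _ ↦ ?_
  rw [Matrix.matrix_eq_sum_single A]
  refine sum_mem fun i _ ↦ sum_mem fun j _ ↦ Submodule.mem_iSup_of_mem (d i - d j) ?_
  exact mem_eigenspace_iff.mpr (lie_diagonal_single d i j (A i j))

theorem isAdDiagonalizable_conj_of_isDiag {P D : Matrix n n R} (hP : IsUnit P.det)
    (hD : D.IsDiag) : IsAdDiagonalizable R (P * D * P⁻¹) := by
  rw [← hD.diagonal_diag, ← Matrix.lieConj_apply P _ (P.invertibleOfIsUnitDet hP)]
  exact (isAdDiagonalizable_diagonal D.diag).map_lieEquiv _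

end Matrix

/-- If `Λ` is diagonalizable over `ℂ` and `[Λ, K_l] = (l+2)·K_l` for the sequence
`K₀ = W`, `K_{l+1} = [Υ, K_l]`, then `Υ` decomposes as `Υ = Υ̂ + Υ̌`, where the 'hat-part'
satisfies `[Λ, Υ̂] = Υ̂` and the 'check-part' `Υ̌` centralizes all the matrices `K_l`. -/
theorem hat_check_decomposition (n : ℕ) (hn : 1 ≤ n)
    (Λ Υ W : Matrix (Fin n) (Fin n) ℂ)
    (hΛdiag : ∃ P D : Matrix (Fin n) (Fin n) ℂ, IsUnit P.det ∧ D.IsDiag ∧ Λ = P * D * P⁻¹)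
    (K : ℕ → Matrix (Fin n) (Fin n) ℂ)
    (hK0 : K 0 = W) (hKrec : ∀ l, K (l + 1) = Υ * K l - K l * Υ)
    (hcomm : ∀ l : ℕ, Λ * K l - K l * Λ = ((l : ℂ) + 2) • K l) :
    ∃ Υhat Υcheck : Matrix (Fin n) (Fin n) ℂ,
      Υ = Υhat + Υcheck ∧ (Λ * Υhat - Υhat * Λ = Υhat) ∧
        ∀ l : ℕ, Υcheck * K l - K l * Υcheck = 0 := by
  obtain ⟨P, D, hP, hD, rfl⟩ := hΛdiag
  obtain ⟨Υhat, Υcheck, hΥ, hhat, hcheck⟩ := hat_check_decomposition_general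
    (M := Matrix (Fin n) (Fin n) ℂ) (isAdDiagonalizable_conj_of_isDiag hP hD) Υ 1
  refine ⟨Υhat, Υcheck, hΥ, hhat.trans (one_smul ℂ Υhat), fun l ↦ hcheck (l + 2) (K l) (hcomm l) ?_⟩
  rw [Ring.lie_def Υ, ← hKrec, Ring.lie_def, hcomm, Nat.cast_succ, add_comm (l : ℂ) 1, add_assoc]
end

section
/- Let F be a field of characteristic zero, n ≥ 1, and let Λ, Υ, W ∈ M_n(F). Set K₀ := W and K_{l+1} := [Υ, K_l] for l ∈ ℕ, and suppose [Λ, K_l] = (l+2)·K_l for every l ∈ ℕ. Then there exists an invertible matrix M ∈ M_n(F) such that for every l ∈ ℕ the matrix M·K_l·M^{-1} is strictly upper triangular, i.e. its (i, j) entry vanishes whenever i ≥ j. (In the paper: the Lie algebra generated by the K_l consists of nilpotent matrices and, by Engel's theorem, all K_l can be simultaneously brought to strictly upper triangular form, so modulo SL(n, F)-equivalence the matrix-valued function V(t) = e^{tΥ}We^{−tΥ} is a polynomial in t with strictly upper triangular matrix coefficients.) -/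
/-!
Since `ad Λ` has finitely many eigenvalues, the weights of the `ad Λ`-eigenvectors `A` with
`A v ∉ U` have a maximal element whenever `v ∉ U`. Multiplying by some `K l` raises the weight, so
an `A` of maximal weight gives a vector `w = A v` outside `U` which every `K l` sends into `U`.
Starting from `U = 0` and repeatedly adjoining such a `w` to `U` builds a basis in which all `K l`
are strictly upper triangular.
-/

open Module

section PositiveWeights

theorem lie_mul_eq_add_smul {R A : Type*} [CommSemiring R] [Ring A] [Algebra R A] {x a b : A}
    {r s : R} (ha : ⁅x, a⁆ = r • a) (hb : ⁅x, b⁆ = s • b) : ⁅x, a * b⁆ = (r + s) • (a * b) := by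
  have leibniz : ⁅x, a * b⁆ = ⁅x, a⁆ * b + a * ⁅x, b⁆ := by
    simp only [Ring.lie_def]
    noncomm_ring
  rw [leibniz, ha, hb, smul_mul_assoc, mul_smul_comm, add_smul]

theorem finite_setOf_exists_lie_eq_smul {F A : Type*} [Field F] [Ring A] [Algebra F A]
    [FiniteDimensional F A] (x : A) : {c : F | ∃ a : A, a ≠ 0 ∧ ⁅x, a⁆ = c • a}.Finite := by
  let ad_x : End F A := LinearMap.mulLeft F x - LinearMap.mulRight F x
  refine ad_x.finite_hasEigenvalue.subset ?_
  rintro c ⟨a, ha, hxa⟩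
  exact End.hasEigenvalue_of_hasEigenvector ⟨End.mem_eigenspace_iff.2 hxa, ha⟩

variable {F V ι Γ : Type*} [Field F] [AddCommGroup V] [Module F V] [FiniteDimensional F V]
  [AddMonoid Γ] [Preorder Γ] [AddRightStrictMono Γ]

theorem exists_notMem_forall_apply_mem_of_pos_weights {φ : Γ →+ F} (hφ : Function.Injective φ)
    {L : End F V} {T : ι → End F V} (hT : ∀ i, ∃ γ, 0 < γ ∧ ⁅L, T i⁆ = φ γ • T i)
    {U : Submodule F V} (hU : U ≠ ⊤) : ∃ w ∉ U, ∀ i, T i w ∈ U := by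
  obtain ⟨v, hv⟩ : ∃ v, v ∉ U := by simpa [Submodule.eq_top_iff'] using hU
  let weights : Set Γ := {γ | ∃ A : End F V, ⁅L, A⁆ = φ γ • A ∧ A v ∉ U}
  have finite_weights : weights.Finite := by
    refine ((finite_setOf_exists_lie_eq_smul L).preimage hφ.injOn).subset ?_
    rintro γ ⟨A, hLA, hAv⟩
    exact ⟨A, by rintro rfl; simp at hAv, hLA⟩
  have zero_mem_weights : 0 ∈ weights := ⟨1, by simp [Ring.lie_def], by simpa using hv⟩
  obtain ⟨γ, hγ⟩ := finite_weights.exists_maximal ⟨0, zero_mem_weights⟩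
  obtain ⟨A, hLA, hAv⟩ := hγ.prop
  refine ⟨A v, hAv, fun i ↦ ?_⟩
  obtain ⟨δ, hδ, hLT⟩ := hT i
  by_contra hTA
  have raised_mem : δ + γ ∈ weights := ⟨T i * A, by rw [map_add, lie_mul_eq_add_smul hLT hLA], hTA⟩
  exact hγ.not_gt raised_mem (lt_add_of_pos_left γ hδ)

end PositiveWeights

section AdaptedBasis

variable {F V ι : Type*} [DivisionRing F] [AddCommGroup V] [Module F V] {T : ι → End F V}

theorem exists_linearIndependent_forall_apply_mem_span_Iio
    (hT : ∀ U : Submodule F V, U ≠ ⊤ → ∃ w ∉ U, ∀ i, T i w ∈ U) {k : ℕ} (hk : k ≤ finrank F V) :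
    ∃ b : Fin k → V, LinearIndependent F b ∧
      ∀ i j, T i (b j) ∈ Submodule.span F (b '' Set.Iio j) := by
  induction k with
  | zero => exact ⟨Fin.elim0, linearIndependent_empty_type, fun _ j ↦ j.elim0⟩
  | succ k ih =>
    obtain ⟨b, hb, hTb⟩ := ih (Nat.le_of_succ_le hk)
    have span_ne_top : Submodule.span F (Set.range b) ≠ ⊤ := by
      intro h_top
      have h_card := finrank_span_eq_card hb
      rw [h_top, finrank_top, Fintype.card_fin] at h_card
      omega
    obtain ⟨w, hw, hTw⟩ := hT _ span_ne_top
    refine ⟨Fin.snoc b w, hb.finSnoc hw, fun i j ↦ ?_⟩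
    cases j using Fin.lastCases with
    | last =>
      rw [Fin.snoc_last]
      refine Submodule.span_mono ?_ (hTw i)
      rintro _ ⟨j, rfl⟩
      exact ⟨j.castSucc, j.castSucc_lt_last, Fin.snoc_castSucc ..⟩
    | cast j =>
      rw [Fin.snoc_castSucc, ← Fin.image_castSucc_Iio, Set.image_image]
      simpa only [Fin.snoc_castSucc] using hTb i j

theorem exists_basis_forall_apply_mem_flag [FiniteDimensional F V]
    (hT : ∀ U : Submodule F V, U ≠ ⊤ → ∃ w ∉ U, ∀ i, T i w ∈ U) {n : ℕ} (hn : finrank F V = n) :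
    ∃ b : Basis (Fin n) F V, ∀ i j, T i (b j) ∈ b.flag j.castSucc := by
  obtain ⟨b, hb, hTb⟩ := exists_linearIndependent_forall_apply_mem_span_Iio hT hn.ge
  refine ⟨basisOfLinearIndependentOfCardEqFinrank' b hb (by simp [hn]), fun i j ↦ ?_⟩
  simpa [Basis.flag, Set.Iio] using hTb i j

end AdaptedBasis

theorem toMatrix_apply_eq_zero_of_apply_mem_flag {R M : Type*} [CommRing R] [AddCommGroup M]
    [Module R M] {n : ℕ} {b : Basis (Fin n) R M} {f : End R M} {i j : Fin n}
    (hf : f (b j) ∈ b.flag j.castSucc) (hji : j ≤ i) : LinearMap.toMatrix b b f i j = 0 := by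
  rw [LinearMap.toMatrix_apply]
  exact b.flag_le_ker_coord (Fin.castSucc_le_castSucc_iff.2 hji) hf

theorem toMatrix_basisFun_mul_mul_inv {R n : Type*} [CommRing R] [Fintype n] [DecidableEq n]
    (b : Basis n R (n → R)) (A : Matrix n n R) :
    b.toMatrix (Pi.basisFun R n) * A * (b.toMatrix (Pi.basisFun R n))⁻¹ =
      LinearMap.toMatrix b b (Matrix.toLin' A) := by
  rw [Matrix.inv_eq_right_inv (b.toMatrix_mul_toMatrix_flip (Pi.basisFun R n)),
    basis_toMatrix_mul b (Pi.basisFun R n) (Pi.basisFun R n), Matrix.toLin_eq_toLin',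
    linearMap_toMatrix_mul_basis_toMatrix]

theorem simultaneous_strict_upper_triangularization_general {F ι Γ : Type*} [Field F]
    [AddMonoid Γ] [Preorder Γ] [AddRightStrictMono Γ] {φ : Γ →+ F} (hφ : Function.Injective φ)
    {n : ℕ} {L : Matrix (Fin n) (Fin n) F} {K : ι → Matrix (Fin n) (Fin n) F}
    (hK : ∀ l, ∃ γ, 0 < γ ∧ ⁅L, K l⁆ = φ γ • K l) :
    ∃ M : Matrix (Fin n) (Fin n) F, IsUnit M.det ∧
      ∀ (l : ι) (i j : Fin n), j ≤ i → (M * K l * M⁻¹) i j = 0 := by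
  have weights_toLin' :
      ∀ l, ∃ γ, 0 < γ ∧ ⁅Matrix.toLin' L, Matrix.toLin' (K l)⁆ = φ γ • Matrix.toLin' (K l) := by
    intro l
    obtain ⟨γ, hγ, hLK⟩ := hK l
    refine ⟨γ, hγ, ?_⟩
    rw [← map_smul, ← hLK, Ring.lie_def, Ring.lie_def, map_sub, Matrix.toLin'_mul,
      Matrix.toLin'_mul, End.mul_eq_comp, End.mul_eq_comp]
  obtain ⟨b, hb⟩ := exists_basis_forall_apply_mem_flag
    (fun U hU ↦ exists_notMem_forall_apply_mem_of_pos_weights hφ weights_toLin' (U := U) hU)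
    (finrank_fin_fun F)
  refine ⟨b.toMatrix (Pi.basisFun F (Fin n)), ?_, fun l i j hji ↦ ?_⟩
  · exact Matrix.isUnit_det_of_right_inverse (b.toMatrix_mul_toMatrix_flip _)
  · rw [toMatrix_basisFun_mul_mul_inv]
    exact toMatrix_apply_eq_zero_of_apply_mem_flag (hb l j) hji

/-- If `[Λ, K_l] = (l+2)·K_l` for the sequence `K₀ = W`, `K_{l+1} = [Υ, K_l]`, then there
is an invertible matrix `M` conjugating all the `K_l` simultaneously to strictly upper
triangular form (the `(i, j)` entry of `M K_l M⁻¹` vanishes whenever `i ≥ j`). -/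
theorem simultaneous_strict_upper_triangularization (F : Type*) [Field F] [CharZero F]
    (n : ℕ) (hn : 1 ≤ n)
    (Λ Υ W : Matrix (Fin n) (Fin n) F)
    (K : ℕ → Matrix (Fin n) (Fin n) F)
    (hK0 : K 0 = W) (hKrec : ∀ l, K (l + 1) = Υ * K l - K l * Υ)
    (hcomm : ∀ l : ℕ, Λ * K l - K l * Λ = ((l : F) + 2) • K l) :
    ∃ M : Matrix (Fin n) (Fin n) F, IsUnit M.det ∧
      ∀ (l : ℕ) (i j : Fin n), j ≤ i → (M * K l * M⁻¹) i j = 0 :=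
  simultaneous_strict_upper_triangularization_general (φ := Nat.castAddMonoidHom F)
    Nat.cast_injective fun l ↦ ⟨l + 2, by omega, by simpa [Ring.lie_def] using hcomm l⟩
end

section
/- Let n ≥ 1 and let Υ, W, Γ ∈ M_n(ℝ). Set K₀ := W and K_{l+1} := [Υ, K_l] for l ∈ ℕ, and suppose [Γ, K_l] = 0 for all l ∈ ℕ. Then exp(t(Υ + Γ))·W·exp(−t(Υ + Γ)) = exp(tΥ)·W·exp(−tΥ) for all t ∈ ℝ. (In the paper: the matrix Υ parametrizing the Lie-symmetry vector field ∂_t + Υx∂_x of the system x_tt = e^{tΥ}We^{−tΥ}x is defined only up to adding an arbitrary matrix from the centralizer 𝔰 of {K_l}.) -/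
open NormedSpace

/-!
Hadamard's formula `exp (t • a) * x * exp (-(t • a)) = ∑ₖ tᵏ / k! • (ad a)ᵏ x` shows that
conjugating `W` by `exp (t • Υ)` depends only on the iterated commutators `K l = (ad Υ)ˡ W`. Since
`Γ` commutes with every `K l`, the iterated commutators of `W` with `Υ + Γ` are the same `K l`.
-/

section IteratedCommutators

open Finset LieAlgebra
open scoped Nat

attribute [local instance] LieRing.ofAssociativeRing

theorem ad_pow_apply_eq_of_succ_eq_lie (R : Type*) {L : Type*} [CommRing R] [LieRing L]
    [LieAlgebra R L] {a : L} {K : ℕ → L} (hK : ∀ l, K (l + 1) = ⁅a, K l⁆) (k : ℕ) :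
    (ad R L a ^ k) (K 0) = K k := by
  induction k with
  | zero => rw [pow_zero, Module.End.one_apply]
  | succ k ih => rw [pow_succ', Module.End.mul_apply, ih, ad_apply, hK]

theorem ad_pow_apply_eq_sum_antidiagonal (R : Type*) {A : Type*} [CommRing R] [Ring A]
    [Algebra R A] (a x : A) (k : ℕ) :
    (ad R A a ^ k) x =
      ∑ ij ∈ antidiagonal k, k.choose ij.1 • (a ^ ij.1 * x * (-a) ^ ij.2) := by
  have ad_eq : ad R A a = LinearMap.mulLeft R a + LinearMap.mulRight R (-a) := by
    ext y
    simp [Ring.lie_def, sub_eq_add_neg]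
  rw [ad_eq, (LinearMap.commute_mulLeft_right a (-a)).add_pow', LinearMap.sum_apply]
  simp only [LinearMap.pow_mulLeft, LinearMap.pow_mulRight, LinearMap.smul_apply,
    Module.End.mul_apply, LinearMap.mulLeft_apply, LinearMap.mulRight_apply, mul_assoc]

theorem inv_factorial_smul_ad_pow_apply {𝕂 A : Type*} [Field 𝕂] [CharZero 𝕂] [Ring A]
    [Algebra 𝕂 A] (a x : A) (k : ℕ) :
    (k !⁻¹ : 𝕂) • (ad 𝕂 A a ^ k) x =
      ∑ ij ∈ antidiagonal k,
        ((ij.1 !⁻¹ : 𝕂) • a ^ ij.1 * x) * ((ij.2 !⁻¹ : 𝕂) • (-a) ^ ij.2) := by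
  rw [ad_pow_apply_eq_sum_antidiagonal, smul_sum]
  refine sum_congr rfl fun ⟨i, j⟩ hij ↦ ?_
  obtain rfl : i + j = k := mem_antidiagonal.mp hij
  have coeff_eq : ((i + j)! : 𝕂)⁻¹ * (i + j).choose i = (i ! : 𝕂)⁻¹ * (j ! : 𝕂)⁻¹ := by
    have factorial_ne_zero : ((i + j)! : 𝕂) ≠ 0 := mod_cast (i + j).factorial_ne_zero
    rw [Nat.cast_add_choose]
    field_simp
  rw [← Nat.cast_smul_eq_nsmul 𝕂, smul_smul, coeff_eq, smul_mul_assoc, smul_mul_assoc,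
    mul_smul_comm, smul_smul]

variable {𝕂 𝔸 : Type*} [NontriviallyNormedField 𝕂] [CharZero 𝕂] [ContinuousSMul ℚ 𝕂]
  [NormedRing 𝔸] [NormedAlgebra 𝕂 𝔸] [CompleteSpace 𝔸]

theorem hasSum_ad_pow_exp_conj (a x : 𝔸) :
    HasSum (fun k : ℕ ↦ (k !⁻¹ : 𝕂) • (ad 𝕂 𝔸 a ^ k) x) (exp a * x * exp (-a)) := by
  have left_hasSum : HasSum (fun i : ℕ ↦ (i !⁻¹ : 𝕂) • a ^ i * x) (exp a * x) :=
    (exp_series_hasSum_exp' a).mul_right x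
  have right_hasSum : HasSum (fun j : ℕ ↦ (j !⁻¹ : 𝕂) • (-a) ^ j) (exp (-a)) :=
    exp_series_hasSum_exp' (-a)
  have left_summable_norm : Summable fun i : ℕ ↦ ‖(i !⁻¹ : 𝕂) • a ^ i * x‖ :=
    .of_nonneg_of_le (fun _ ↦ norm_nonneg _) (fun _ ↦ norm_mul_le _ _)
      ((norm_expSeries_summable' a).mul_right ‖x‖)
  have right_summable_norm : Summable fun j : ℕ ↦ ‖(j !⁻¹ : 𝕂) • (-a) ^ j‖ :=
    norm_expSeries_summable' (-a)
  simp only [inv_factorial_smul_ad_pow_apply]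
  rw [← left_hasSum.tsum_eq, ← right_hasSum.tsum_eq,
    tsum_mul_tsum_eq_tsum_sum_antidiagonal_of_summable_norm left_summable_norm right_summable_norm]
  exact (summable_norm_sum_mul_antidiagonal_of_summable_norm
    left_summable_norm right_summable_norm).of_norm.hasSum

theorem hasSum_exp_smul_conj_of_succ_eq_lie {a : 𝔸} {K : ℕ → 𝔸}
    (hK : ∀ l, K (l + 1) = ⁅a, K l⁆) (t : 𝕂) :
    HasSum (fun k : ℕ ↦ (k !⁻¹ : 𝕂) • t ^ k • K k) (exp (t • a) * K 0 * exp (-(t • a))) := by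
  simpa only [map_smul, smul_pow, LinearMap.smul_apply, ad_pow_apply_eq_of_succ_eq_lie 𝕂 hK]
    using hasSum_ad_pow_exp_conj (𝕂 := 𝕂) (t • a) (K 0)

theorem conjugation_invariant_under_centralizer_shift_general {Υ Γ : 𝔸} {K : ℕ → 𝔸}
    (hK : ∀ l, K (l + 1) = ⁅Υ, K l⁆) (hΓ : ∀ l, ⁅Γ, K l⁆ = 0) (t : 𝕂) :
    exp (t • (Υ + Γ)) * K 0 * exp (-(t • (Υ + Γ))) = exp (t • Υ) * K 0 * exp (-(t • Υ)) := by
  have hK_shift : ∀ l, K (l + 1) = ⁅Υ + Γ, K l⁆ := fun l ↦ by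
    rw [add_lie, hΓ, add_zero, hK]
  exact (hasSum_exp_smul_conj_of_succ_eq_lie hK_shift t).unique
    (hasSum_exp_smul_conj_of_succ_eq_lie hK t)

end IteratedCommutators

/-- If `Γ` centralizes all the matrices `K_l` (where `K₀ = W`, `K_{l+1} = [Υ, K_l]`),
then conjugating `W` by `e^{t(Υ+Γ)}` gives the same result as conjugating by `e^{tΥ}`:
the matrix `Υ` is defined only up to adding an element of the centralizer of `{K_l}`. -/
theorem conjugation_invariant_under_centralizer_shift (n : ℕ) (hn : 1 ≤ n)
    (Υ W Γ : Matrix (Fin n) (Fin n) ℝ)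
    (K : ℕ → Matrix (Fin n) (Fin n) ℝ)
    (hK0 : K 0 = W) (hKrec : ∀ l, K (l + 1) = Υ * K l - K l * Υ)
    (hΓ : ∀ l : ℕ, Γ * K l - K l * Γ = 0) :
    ∀ t : ℝ,
      exp (t • (Υ + Γ)) * W * exp (-(t • (Υ + Γ))) =
        exp (t • Υ) * W * exp (-(t • Υ)) := by
  open scoped Matrix.Norms.Operator in
  exact hK0 ▸ conjugation_invariant_under_centralizer_shift_general hKrec hΓ
end

section
/- Let n ≥ 1, let Υ, Υ̃, W, W̃ ∈ M_n(ℝ) with trace(W) = trace(W̃) = 0, and let ε, ε̃ ∈ ℝ. Set K₀ := W, K_{l+1} := [Υ, K_l] for l ∈ ℕ. Then ε·E + exp(tΥ)·W·exp(−tΥ) = ε̃·E + exp(tΥ̃)·W̃·exp(−tΥ̃) holds for all t ∈ ℝ if and only if ε = ε̃, W = W̃, and [Υ − Υ̃, K_l] = 0 for all l ∈ ℕ. (In the paper: the tuples (ε, W, Υ) and (ε̃, W̃, Υ̃) are associated with the same matrix-valued function V(t) = εE + e^{tΥ}We^{−tΥ} exactly when ε = ε̃, W = W̃ and Υ − Υ̃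 lies in the centralizer 𝔰 of {K_l}.) -/
open NormedSpace

/-!
The curve `t ↦ exp (tA) X exp (-tA)` is analytic and its `l`-th derivative at `0` is `(ad A)^l X`,
so two such curves through `X` agree exactly when `(ad A)^l X = (ad B)^l X` for all `l`; by
induction on `l` this says that `A - B` commutes with every `(ad A)^l X`. The scalar part is
separated from the conjugated part by evaluating at `t = 0` and applying the trace.
-/

theorem iterate_eq_iff_apply_iterate_eq {α : Type*} (f g : α → α) (x : α) :
    (∀ l, f^[l] x = g^[l] x) ↔ ∀ l, f (f^[l] x) = g (f^[l] x) := by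
  constructor
  · intro h l
    rw [← Function.iterate_succ_apply' f, h (l + 1), Function.iterate_succ_apply', h l]
  · intro h l
    induction l with
    | zero => rfl
    | succ l ih => rw [Function.iterate_succ_apply', h l, ih, Function.iterate_succ_apply']

section IdentityTheorem

variable {𝕜 E : Type*} [NontriviallyNormedField 𝕜] [CharZero 𝕜]
  [NormedAddCommGroup E] [NormedSpace 𝕜 E] [CompleteSpace E]

theorem eventually_eq_zero_of_iteratedDeriv_eq_zero {f : 𝕜 → E} {z : 𝕜} (hf : AnalyticAt 𝕜 f z)
    (h : ∀ l, iteratedDeriv l f z = 0) : ∀ᶠ w in nhds z, f w = 0 := by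
  rw [← analyticOrderAt_eq_top, ENat.eq_top_iff_forall_ge]
  exact fun l => (natCast_le_analyticOrderAt_iff_iteratedDeriv_eq_zero hf).mpr fun i _ => h i

theorem eq_iff_iteratedDeriv_eq_of_analytic [PreconnectedSpace 𝕜] {f g : 𝕜 → E}
    (hf : ∀ t, AnalyticAt 𝕜 f t) (hg : ∀ t, AnalyticAt 𝕜 g t) (z : 𝕜) :
    f = g ↔ ∀ l, iteratedDeriv l f z = iteratedDeriv l g z := by
  refine ⟨fun h l => by rw [h], fun h => ?_⟩
  have hsub : ∀ l, iteratedDeriv l (f - g) z = 0 := fun l => by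
    rw [iteratedDeriv_sub (hf z).contDiffAt (hg z).contDiffAt, h l, sub_self]
  refine AnalyticOnNhd.eq_of_eventuallyEq (fun t _ => hf t) (fun t _ => hg t) (z₀ := z) ?_
  filter_upwards [eventually_eq_zero_of_iteratedDeriv_eq_zero ((hf z).sub (hg z)) hsub] with w hw
  exact sub_eq_zero.mp hw

end IdentityTheorem

section ExpConj

variable {𝕜 𝔸 : Type*} [RCLike 𝕜] [NormedRing 𝔸] [NormedAlgebra 𝕜 𝔸]

/-- The orbit `t ↦ exp (tA) X exp (-tA)` of `X` under conjugation by the one-parameter group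
generated by `A`. The inverse of `exp (tA)` is written `exp (-tA)`. -/
noncomputable def expConj (A X : 𝔸) (t : 𝕜) : 𝔸 :=
  exp (t • A) * X * exp (-(t • A))

theorem expConj_zero (A X : 𝔸) : expConj A X (0 : 𝕜) = X := by
  simp [expConj]

theorem smul_one_add_expConj_eq_iff (τ : 𝔸 →ₗ[𝕜] 𝕜) (hτ : τ 1 ≠ 0) {A B X Y : 𝔸}
    (hXY : τ X = τ Y) (a b : 𝕜) :
    (∀ t : 𝕜, a • (1 : 𝔸) + expConj A X t = b • (1 : 𝔸) + expConj B Y t) ↔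
      a = b ∧ X = Y ∧ (expConj A X : 𝕜 → 𝔸) = expConj B Y := by
  constructor
  · intro h
    have hzero : a • (1 : 𝔸) + X = b • (1 : 𝔸) + Y := by
      simpa only [expConj_zero] using h 0
    have hscalar : a = b := by
      have hτzero := congrArg τ hzero
      rw [map_add, map_add, hXY, add_left_inj, map_smul, map_smul] at hτzero
      exact mul_right_cancel₀ hτ hτzero
    subst hscalar
    exact ⟨rfl, add_left_cancel hzero, funext fun t => add_left_cancel (h t)⟩
  · rintro ⟨rfl, -, hconj⟩ t
    rw [hconj]

variable [CompleteSpace 𝔸]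

theorem hasDerivAt_expConj (A X : 𝔸) (t : 𝕜) :
    HasDerivAt (expConj A X) (expConj A ⁅A, X⁆ t) t := by
  have hleft : HasDerivAt (fun s : 𝕜 => exp (s • A)) (exp (t • A) * A) t :=
    hasDerivAt_exp_smul_const A t
  have hright : HasDerivAt (fun s : 𝕜 => exp (-(s • A))) (-A * exp (-(t • A))) t := by
    simpa only [smul_neg] using hasDerivAt_exp_smul_const' (-A) t
  refine ((hleft.mul_const X).mul hright).congr_deriv ?_
  rw [expConj, Ring.lie_def]
  noncomm_ring

theorem analyticAt_expConj (A X : 𝔸) (t : 𝕜) : AnalyticAt 𝕜 (expConj A X) t := by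
  have hleft : AnalyticAt 𝕜 (fun s : 𝕜 => exp (s • A)) t :=
    (exp_analytic (t • A)).comp_of_eq (by fun_prop) rfl
  have hright : AnalyticAt 𝕜 (fun s : 𝕜 => exp (-(s • A))) t :=
    (exp_analytic (-(t • A))).comp_of_eq (by fun_prop) rfl
  exact (hleft.mul analyticAt_const).mul hright

theorem iteratedDeriv_expConj (A X : 𝔸) (l : ℕ) :
    iteratedDeriv l (expConj A X : 𝕜 → 𝔸) = expConj A ((⁅A, ·⁆)^[l] X) := by
  induction l with
  | zero => rw [iteratedDeriv_zero, Function.iterate_zero_apply]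
  | succ l ih =>
    funext t
    rw [iteratedDeriv_succ, ih, (hasDerivAt_expConj A _ t).deriv, Function.iterate_succ_apply']

theorem expConj_eq_iff_iterate_lie_eq (A B X Y : 𝔸) :
    (expConj A X : 𝕜 → 𝔸) = expConj B Y ↔ ∀ l, (⁅A, ·⁆)^[l] X = (⁅B, ·⁆)^[l] Y := by
  rw [eq_iff_iteratedDeriv_eq_of_analytic (analyticAt_expConj A X) (analyticAt_expConj B Y) 0]
  simp only [iteratedDeriv_expConj, expConj_zero]

theorem expConj_eq_iff_lie_sub_iterate_eq_zero (A B X : 𝔸) :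
    (expConj A X : 𝕜 → 𝔸) = expConj B X ↔ ∀ l, ⁅A - B, (⁅A, ·⁆)^[l] X⁆ = 0 := by
  rw [expConj_eq_iff_iterate_lie_eq, iterate_eq_iff_apply_iterate_eq]
  have hlie (Y : 𝔸) : ⁅A - B, Y⁆ = ⁅A, Y⁆ - ⁅B, Y⁆ := by
    simp only [Ring.lie_def]
    noncomm_ring
  simp only [hlie, sub_eq_zero]

theorem same_V_iff_centralizer_difference_general (τ : 𝔸 →ₗ[𝕜] 𝕜) (hτ : τ 1 ≠ 0)
    (Υ Υt W Wt : 𝔸) (hW : τ W = τ Wt) (ε εt : 𝕜)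
    (K : ℕ → 𝔸) (hK0 : K 0 = W) (hKrec : ∀ l, K (l + 1) = ⁅Υ, K l⁆) :
    (∀ t : 𝕜, ε • (1 : 𝔸) + exp (t • Υ) * W * exp (-(t • Υ)) =
        εt • (1 : 𝔸) + exp (t • Υt) * Wt * exp (-(t • Υt))) ↔
      ε = εt ∧ W = Wt ∧ ∀ l, ⁅Υ - Υt, K l⁆ = 0 := by
  have hK : ∀ l, K l = (⁅Υ, ·⁆)^[l] W := fun l => by
    induction l with
    | zero => exact hK0
    | succ l ih => rw [hKrec, ih, Function.iterate_succ_apply']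
  simp only [hK]
  refine (smul_one_add_expConj_eq_iff τ hτ hW ε εt).trans ?_
  refine and_congr_right fun _ => and_congr_right fun hWWt => ?_
  rw [← hWWt, expConj_eq_iff_lie_sub_iterate_eq_zero]

end ExpConj

/-- The tuples `(ε, W, Υ)` and `(ε̃, W̃, Υ̃)`, with `W, W̃` traceless, are associated with
the same matrix-valued function `V(t) = ε·E + e^{tΥ} W e^{−tΥ}` if and only if `ε = ε̃`,
`W = W̃` and `Υ − Υ̃` centralizes all the matrices `K_l`, where `K₀ = W` and
`K_{l+1} = [Υ, K_l]`. -/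
theorem same_V_iff_centralizer_difference (n : ℕ) (hn : 1 ≤ n)
    (Υ Υt W Wt : Matrix (Fin n) (Fin n) ℝ)
    (hW : W.trace = 0) (hWt : Wt.trace = 0)
    (ε εt : ℝ)
    (K : ℕ → Matrix (Fin n) (Fin n) ℝ)
    (hK0 : K 0 = W) (hKrec : ∀ l, K (l + 1) = Υ * K l - K l * Υ) :
    (∀ t : ℝ,
        ε • (1 : Matrix (Fin n) (Fin n) ℝ) + exp (t • Υ) * W * exp (-(t • Υ)) =
          εt • (1 : Matrix (Fin n) (Fin n) ℝ) + exp (t • Υt) * Wt * exp (-(t • Υt))) ↔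
      (ε = εt ∧ W = Wt ∧ ∀ l : ℕ, (Υ - Υt) * K l - K l * (Υ - Υt) = 0) := by
  have htrace : Matrix.traceLinearMap (Fin n) ℝ ℝ 1 ≠ 0 := by
    simpa [Matrix.trace_one] using Nat.one_le_iff_ne_zero.mp hn
  open scoped Matrix.Norms.Operator in
  exact same_V_iff_centralizer_difference_general (Matrix.traceLinearMap (Fin n) ℝ ℝ) htrace
    Υ Υt W Wt (hW.trans hWt.symm) ε εt K hK0 hKrec
end

section
/- Let n ≥ 1, let Υ, V₀ ∈ M_n(ℝ), and define V(t) := exp(tΥ)·V₀·exp(−tΥ). Suppose x : ℝ → ℝⁿ is twice differentiable with x''(t) = V(t)·x(t) for all t. Then y(t) := exp(−tΥ)·x(t) is twice differentiable and satisfies y''(t) = −2·Υ·y'(t) + (V₀ − Υ²)·y(t) for all t ∈ ℝ. (In the paper: any t-shift-invariant system x_tt = e^{tΥ}V(0)e^{−tΥ}x is mapped by the point transformation x̃ = e^{−tΥ}x to the constant-coefficient system x̃_tt = −2Υx̃_t + (V(0) − Υ²)x̃, and hence is easily integrable.) -/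
open NormedSpace

/-!
For `y(t) = e^{-ta} x(t)`, differentiation acts on the untwisted curve as `d/dt - a`, because `a`
commutes with `e^{-ta}`: `y' = e^{-ta} (x' - a x)`. Applying this twice and eliminating `x'` gives
`y'' = -2a y' - a² y + e^{-ta} x''`, and the conjugated potential `e^{ta} v e^{-ta}` in the equation
for `x''` turns the last term into `v y`.
-/

section ConjugatedExponential

variable {𝔸 E : Type*} [NormedRing 𝔸] [NormedAlgebra ℚ 𝔸] [CompleteSpace 𝔸]

theorem exp_neg_mul_exp (a : 𝔸) : exp (-a) * exp a = 1 := by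
  rw [← exp_add_of_commute (Commute.refl a).neg_left, neg_add_cancel, exp_zero]

theorem exp_neg_smul_exp_conj_smul [AddCommGroup E] [Module 𝔸 E] (a v : 𝔸) (x : E) :
    exp (-a) • (exp a * v * exp (-a)) • x = v • exp (-a) • x := by
  rw [smul_smul, ← mul_assoc, ← mul_assoc, exp_neg_mul_exp, one_mul, mul_smul]

end ConjugatedExponential

section ExponentialTwist

variable {𝕂 𝔸 E : Type*} [RCLike 𝕂] [NormedRing 𝔸] [NormedAlgebra 𝕂 𝔸] [CompleteSpace 𝔸]
  [NormedAddCommGroup E] [NormedSpace 𝕂 E] [Module 𝔸 E] [IsBoundedSMul 𝔸 E] [IsScalarTower 𝕂 𝔸 E]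

theorem hasDerivAt_exp_neg_smul_smul (a : 𝔸) {x : 𝕂 → E} {x' : E} {t : 𝕂}
    (hx : HasDerivAt x x' t) :
    HasDerivAt (fun s => exp (-(s • a)) • x s) (exp (-(t • a)) • (x' - a • x t)) t := by
  have hexp : HasDerivAt (fun s : 𝕂 => exp (-(s • a))) (-(exp (-(t • a)) * a)) t := by
    simpa only [smul_neg, mul_neg] using hasDerivAt_exp_smul_const (-a) t
  convert hexp.fun_smul hx using 1
  rw [smul_sub, neg_smul, mul_smul, sub_eq_add_neg]

theorem hasDerivAt_deriv_exp_neg_smul_smul (a : 𝔸) {x x' : 𝕂 → E} {x'' : E} {t : 𝕂}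
    (hx : HasDerivAt x (x' t) t) (hx' : HasDerivAt x' x'' t) :
    HasDerivAt (fun s => exp (-(s • a)) • (x' s - a • x s))
      ((-2 : 𝕂) • a • exp (-(t • a)) • (x' t - a • x t) - (a * a) • exp (-(t • a)) • x t +
        exp (-(t • a)) • x'') t := by
  convert hasDerivAt_exp_neg_smul_smul a (hx'.fun_sub (hx.fun_const_smul a)) using 1
  have hcomm (w : E) : a • exp (-(t • a)) • w = exp (-(t • a)) • a • w := by
    rw [smul_smul, ((Commute.refl a).smul_right t).neg_right.exp_right.eq, mul_smul]
  simp only [mul_smul, smul_sub, hcomm, neg_smul, two_smul]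
  abel

theorem reduction_to_constant_coefficients_general (a v : 𝔸) (x x' x'' : 𝕂 → E)
    (hx : ∀ t, HasDerivAt x (x' t) t) (hx' : ∀ t, HasDerivAt x' (x'' t) t)
    (hx'' : ∀ t, x'' t = (exp (t • a) * v * exp (-(t • a))) • x t) :
    ∃ y' y'' : 𝕂 → E,
      (∀ t, HasDerivAt (fun s => exp (-(s • a)) • x s) (y' t) t) ∧
      (∀ t, HasDerivAt y' (y'' t) t) ∧
      ∀ t, y'' t = ((-2 : 𝕂) • a) • y' t + (v - a * a) • exp (-(t • a)) • x t := by
  let _ : NormedAlgebra ℚ 𝔸 := .restrictScalars ℚ 𝕂 𝔸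
  refine ⟨_, _, fun t => hasDerivAt_exp_neg_smul_smul a (hx t),
    fun t => hasDerivAt_deriv_exp_neg_smul_smul a (hx t) (hx' t), fun t => ?_⟩
  rw [hx'', exp_neg_smul_exp_conj_smul, sub_smul, smul_assoc]
  abel

end ExponentialTwist

open scoped Matrix.Norms.Operator in
theorem isBoundedSMul_matrix_pi {m R : Type*} [Fintype m] [DecidableEq m] [NormedRing R] :
    IsBoundedSMul (Matrix m m R) (m → R) :=
  .of_norm_smul_le Matrix.linfty_opNorm_mulVec

/-- Any `t`-shift-invariant system `x'' = e^{tΥ} V₀ e^{−tΥ} x` is mapped by the point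
transformation `y = e^{−tΥ} x` to the constant-coefficient system
`y'' = −2Υ y' + (V₀ − Υ²) y`. -/
theorem reduction_to_constant_coefficients (n : ℕ) (hn : 1 ≤ n)
    (Υ V₀ : Matrix (Fin n) (Fin n) ℝ)
    (x x' x'' : ℝ → Fin n → ℝ)
    (hx1 : ∀ t, HasDerivAt x (x' t) t)
    (hx2 : ∀ t, HasDerivAt x' (x'' t) t)
    (hxeq : ∀ t, x'' t = (exp (t • Υ) * V₀ * exp (-(t • Υ))).mulVec (x t)) :
    ∃ y' y'' : ℝ → Fin n → ℝ,
      (∀ t, HasDerivAt (fun s => (exp (-(s • Υ))).mulVec (x s)) (y' t) t) ∧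
      (∀ t, HasDerivAt y' (y'' t) t) ∧
      ∀ t, y'' t =
        ((-2 : ℝ) • Υ).mulVec (y' t) +
          (V₀ - Υ * Υ).mulVec ((exp (-(t • Υ))).mulVec (x t)) := by
  open scoped Matrix.Norms.Operator in
  have := isBoundedSMul_matrix_pi (m := Fin n) (R := ℝ)
  exact reduction_to_constant_coefficients_general Υ V₀ x x' x'' hx1 hx2 hxeq
end
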